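/- arXiv:1404.2298 — 3 statements merged into one kernel-verified Lean document; each statement's English description precedes it below -/
import Mathlib

section
/- Let d ≥ 2 and ε ∈ (0, 1/2]. Let N_{2ε} denote the maximal number N of points x₁,…,x_N on the Euclidean unit sphere in ℝ^d with pairwise distances ‖xⱼ - x_k‖ > 2ε. Then N_{2ε} ≥ (2π)^{1/2}(d-1)^{1/2} · ε^{-(d-1)} / (3^{1/2}·2^{d-1}) and N_{2ε} ≤ 4^{d-1}·π·(d-1)^{1/2} · ε^{-(d-1)} / 15^{(d-1)/2}. -/
open MeasureTheory

/-- log-convexity consequence -/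
lemma gamma_half_sq (a : ℝ) (ha : 0 < a) :
    Real.Gamma (a + 1/2) ^ 2 ≤ Real.Gamma a * Real.Gamma (a + 1) := by
  have h := Real.Gamma_mul_add_mul_le_rpow_Gamma_mul_rpow_Gamma (s := a) (t := a + 1)
    (a := 1/2) (b := 1/2) ha (by linarith) (by norm_num) (by norm_num) (by norm_num)
  have e : (1/2 : ℝ) * a + 1/2 * (a+1) = a + 1/2 := by ring
  rw [e] at h
  have h0 := Real.Gamma_pos_of_pos ha
  have h1 := Real.Gamma_pos_of_pos (show 0 < a + 1 by linarith)
  have h2 := Real.Gamma_pos_of_pos (show 0 < a + 1/2 by linarith)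
  rw [← Real.mul_rpow h0.le h1.le, ← Real.sqrt_eq_rpow] at h
  calc _ ≤ Real.sqrt (Real.Gamma a * Real.Gamma (a + 1)) ^ 2 := by gcongr
    _ = _ := Real.sq_sqrt (by positivity)

/-- volume of the unit ball of `ℝ^n` -/
noncomputable def unitVol (n : ℕ) : ℝ :=
  (volume : Measure (EuclideanSpace ℝ (Fin n))).real (Metric.ball 0 1)

lemma unitVol_eq (n : ℕ) (hn : 1 ≤ n) :
    unitVol n = Real.sqrt Real.pi ^ n / Real.Gamma (n / 2 + 1) := by
  have : Nonempty (Fin n) := ⟨⟨0, hn⟩⟩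
  have := Real.Gamma_pos_of_pos (show (0:ℝ) < n / 2 + 1 by positivity)
  unfold unitVol
  rw [Measure.real, EuclideanSpace.volume_ball]
  simp
  positivity

lemma unitVol_pos (n : ℕ) (hn : 1 ≤ n) : 0 < unitVol n := by
  have := Real.Gamma_pos_of_pos (show (0:ℝ) < n / 2 + 1 by positivity)
  rw [unitVol_eq n hn]
  have := Real.pi_pos
  positivity

lemma ratio_eq (n : ℕ) (hn : 1 ≤ n) :
    (n + 1) * unitVol (n + 1) * Real.Gamma ((n+1)/2) =
      2 * Real.sqrt Real.pi * Real.Gamma (n / 2 + 1) * unitVol n := by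
  have h1 := Real.Gamma_pos_of_pos (show (0:ℝ) < n / 2 + 1 by positivity)
  have h2 := Real.Gamma_pos_of_pos (show (0:ℝ) < (n + 1) / 2 by positivity)
  rw [unitVol_eq n hn, unitVol_eq (n+1) (by omega)]
  push_cast
  rw [Real.Gamma_add_one (s := ((n:ℝ)+1)/2) (by positivity)]
  field_simp
  ring

lemma ratio_upper (n : ℕ) (hn : 1 ≤ n) :
    (n + 1) * unitVol (n + 1) ≤ Real.pi * Real.sqrt n * unitVol n := by
  have h1 := Real.Gamma_pos_of_pos (show (0:ℝ) < n / 2 + 1 by positivity)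
  have h2 := Real.Gamma_pos_of_pos (show (0:ℝ) < (n + 1) / 2 by positivity)
  have hv := unitVol_pos n hn
  have hpi := Real.pi_pos
  have key : 2 * Real.sqrt Real.pi * Real.Gamma (n / 2 + 1) ≤
      Real.pi * Real.sqrt n * Real.Gamma ((n+1)/2) := by
    rcases Nat.lt_or_ge 1 n with h | h
    · have g := gamma_half_sq (((n:ℝ)+1)/2) (by positivity)
      rw [Real.Gamma_add_one (s := ((n:ℝ)+1)/2) (by positivity),
        show ((n:ℝ)+1)/2 + 1/2 = n/2+1 by ring] at g
      apply le_of_sq_le_sq _ (by positivity)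
      rw [mul_pow, mul_pow, mul_pow, mul_pow, Real.sq_sqrt hpi.le, Real.sq_sqrt (by positivity)]
      have hn2 : (2:ℝ) ≤ n := by exact_mod_cast h
      have h3 := Real.pi_gt_three
      have : 2 * ((n:ℝ)+1) ≤ Real.pi * n := by nlinarith
      calc 2^2 * Real.pi * Real.Gamma (n / 2 + 1)^2 
          ≤ 2^2 * Real.pi * (Real.Gamma ((n+1)/2) * ((n+1)/2 * Real.Gamma ((n+1)/2))) := by gcongr
        _ = Real.pi * (2 * (n+1)) * Real.Gamma ((n+1)/2)^2 := by ring
        _ ≤ Real.pi * (Real.pi * n) * Real.Gamma ((n+1)/2)^2 := by gcongr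
        _ = _ := by ring
    · obtain rfl : n = 1 := by omega
      rw [Real.Gamma_add_one (by norm_num)]
      norm_num
      rw [Real.Gamma_one_half_eq]
      nlinarith [Real.sq_sqrt hpi.le]
  have := ratio_eq n hn
  refine le_of_mul_le_mul_right ?_ h2
  rw [this]
  nlinarith

lemma ratio_lower (n : ℕ) (hn : 1 ≤ n) :
    Real.sqrt (2 * Real.pi) * Real.sqrt n * unitVol n ≤ (n + 1) * unitVol (n + 1) := by
  have hn0 : (0:ℝ) < n := by exact_mod_cast hn
  have h1 := Real.Gamma_pos_of_pos (show (0:ℝ) < n / 2 + 1 by positivity)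
  have h2 := Real.Gamma_pos_of_pos (show (0:ℝ) < (n + 1) / 2 by positivity)
  have h3 := Real.Gamma_pos_of_pos (show (0:ℝ) < n / 2 by positivity)
  have hv := unitVol_pos n hn
  have hpi := Real.pi_pos
  have key : Real.sqrt (2 * Real.pi) * Real.sqrt n * Real.Gamma ((n+1)/2) ≤
      2 * Real.sqrt Real.pi * Real.Gamma (n / 2 + 1) := by
    have g := gamma_half_sq ((n:ℝ)/2) (by positivity)
    have e := Real.Gamma_add_one (s := (n:ℝ)/2) (by positivity)
    rw [show (n:ℝ)/2 + 1/2 = (n+1)/2 by ring] at g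
    apply le_of_sq_le_sq _ (by positivity)
    rw [mul_pow, mul_pow, mul_pow, mul_pow, Real.sq_sqrt hpi.le, Real.sq_sqrt (by positivity),
      Real.sq_sqrt (by positivity)]
    calc 2 * Real.pi * n * Real.Gamma ((n+1)/2)^2 
        ≤ 2 * Real.pi * n * (Real.Gamma (n/2) * Real.Gamma (n/2+1)) := by gcongr
      _ = 4 * Real.pi * Real.Gamma (n/2+1) * (n/2 * Real.Gamma (n/2)) := by ring
      _ = _ := by rw [← e]; ring
  have := ratio_eq n hn
  refine le_of_mul_le_mul_right ?_ h2
  rw [this]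
  nlinarith

lemma cone_integral (n : ℕ) (hn : 1 ≤ n) (s h : ℝ) (hs : 0 < s) (hh : 0 ≤ h) :
    ∫⁻ y : EuclideanSpace ℝ (Fin n), ENNReal.ofReal (h * (1 - ‖y‖ / s)) =
      ENNReal.ofReal (unitVol n * s ^ n * h / (n + 1)) := by
  have : Nonempty (Fin n) := ⟨⟨0, hn⟩⟩
  let f : ℝ → ℝ := fun r => max (h * (1 - r / s)) 0
  have hf : ∀ r, ENNReal.ofReal (h * (1 - r / s)) = ENNReal.ofReal (f r) := by
    intro r
    simp only [f]
    rcases le_total (h * (1 - r / s)) 0 with h0 | h0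
    · rw [max_eq_right h0, ENNReal.ofReal_of_nonpos h0]; simp
    · rw [max_eq_left h0]
  have hf0 : ∀ r, s < r → f r = 0 := by
    intro r hr
    simp only [f]
    apply max_eq_right
    have : 1 < r / s := by rwa [one_lt_div hs]
    nlinarith
  have hc : Continuous (fun y : EuclideanSpace ℝ (Fin n) => f ‖y‖) := by
    simp only [f]; fun_prop
  have hcs : HasCompactSupport (fun y : EuclideanSpace ℝ (Fin n) => f ‖y‖) := by
    apply HasCompactSupport.intro (isCompact_closedBall (0 : EuclideanSpace ℝ (Fin n)) s)
    intro x hx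
    apply hf0
    simpa using hx
  simp_rw [hf]
  rw [← ofReal_integral_eq_lintegral_ofReal (hc.integrable_of_hasCompactSupport hcs)
    (Filter.Eventually.of_forall fun y => le_max_right _ _)]
  congr 1
  rw [integral_fun_norm_addHaar volume f]
  have h1 : ∫ y in Set.Ioi (0:ℝ), y ^ (Module.finrank ℝ (EuclideanSpace ℝ (Fin n)) - 1) • f y =
      ∫ y in (0:ℝ)..s, (h * y ^ (n-1) - h / s * y ^ n) := by
    rw [intervalIntegral.integral_of_le hs.le]
    rw [← Set.Ioc_union_Ioi_eq_Ioi hs.le]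
    rw [setIntegral_eq_of_subset_of_forall_sdiff_eq_zero (s := Set.Ioc 0 s)]
    · apply setIntegral_congr_fun measurableSet_Ioc
      intro y hy
      have : y / s ≤ 1 := by rw [div_le_one hs]; exact hy.2
      have h2 : f y = h * (1 - y / s) := max_eq_left (mul_nonneg hh (by linarith))
      obtain ⟨m, rfl⟩ : ∃ m, n = m + 1 := ⟨n-1, by omega⟩
      simp only [h2, finrank_euclideanSpace, Fintype.card_fin, smul_eq_mul, Nat.add_sub_cancel]
      field_simp
      ring
    · exact measurableSet_Ioc.union measurableSet_Ioi
    · exact Set.subset_union_left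
    · intro x hx
      have : s < x := by
        rcases hx.1 with h | h
        · exact absurd h hx.2
        · exact h
      simp [hf0 x this]
  rw [h1, intervalIntegral.integral_sub (by apply Continuous.intervalIntegrable; fun_prop)
    (by apply Continuous.intervalIntegrable; fun_prop)]
  simp only [intervalIntegral.integral_const_mul, integral_pow]
  obtain ⟨m, rfl⟩ : ∃ m, n = m + 1 := ⟨n-1, by omega⟩
  simp [finrank_euclideanSpace, unitVol]
  field_simp
  ring

/-- double cone with axis `e` -/
def dcone {n : ℕ} (e : EuclideanSpace ℝ (Fin (n+1))) (s c h : ℝ) :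
    Set (EuclideanSpace ℝ (Fin (n+1))) :=
  {x | Real.sqrt (‖x‖ ^ 2 - inner ℝ e x ^ 2) * c ≤ inner ℝ e x * s ∧
    inner ℝ e x * s ≤ h * s - (h - c) * Real.sqrt (‖x‖ ^ 2 - inner ℝ e x ^ 2)}

lemma isClosed_dcone {n : ℕ} (e : EuclideanSpace ℝ (Fin (n+1))) (s c h : ℝ) :
    IsClosed (dcone e s c h) := by
  unfold dcone
  rw [Set.ofPred_and]
  apply IsClosed.inter
  · apply isClosed_le <;> fun_prop
  · apply isClosed_le <;> fun_prop

/-- splitting off the first coordinate -/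
noncomputable def splitMap (n : ℕ) (x : EuclideanSpace ℝ (Fin (n+1))) :
    ℝ × EuclideanSpace ℝ (Fin n) := (x 0, WithLp.toLp 2 (fun i => x i.succ))

lemma splitMap_mp (n : ℕ) : MeasurePreserving (splitMap n) volume volume := by
  have h1 := PiLp.volume_preserving_ofLp (Fin (n+1))
  have h2 := volume_preserving_piFinSuccAbove (fun _ : Fin (n+1) => ℝ) 0
  have h3 := (MeasurePreserving.id (volume : Measure ℝ)).prod (PiLp.volume_preserving_toLp (Fin n))
  have := (h3.comp h2).comp h1
  exact this

lemma volume_dcone {n : ℕ} (hn : 1 ≤ n) (e : EuclideanSpace ℝ (Fin (n+1))) (he : ‖e‖ = 1)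
    (s c h : ℝ) (hs : 0 < s) (hh : 0 ≤ h) :
    volume (dcone e s c h) = ENNReal.ofReal (unitVol n * s ^ n * h / (n + 1)) := by
  obtain ⟨b, hb⟩ : ∃ b : OrthonormalBasis (Fin (n+1)) ℝ (EuclideanSpace ℝ (Fin (n+1))),
      b 0 = e := by
    have ho : Orthonormal ℝ (({0} : Set (Fin (n+1))).domRestrict (fun _ => e)) := by
      constructor
      · intro i; simpa using he
      · intro i j hij
        exact absurd (Subsingleton.elim i j) hij
    obtain ⟨b, hb⟩ := ho.exists_orthonormalBasis_extension_of_card_eq (by simp)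
    exact ⟨b, hb 0 rfl⟩
  let R : Set (ℝ × EuclideanSpace ℝ (Fin n)) :=
    {p | ‖p.2‖ * c ≤ p.1 * s ∧ p.1 * s ≤ h * s - (h - c) * ‖p.2‖}
  have hR : MeasurableSet R := by
    apply IsClosed.measurableSet
    simp only [R]
    rw [Set.ofPred_and]
    apply IsClosed.inter
    · apply isClosed_le <;> fun_prop
    · apply isClosed_le <;> fun_prop
  have hmp := (splitMap_mp n).comp b.measurePreserving_repr
  have hpre : dcone e s c h = (splitMap n ∘ b.repr) ⁻¹' R := by
    ext x
    have h1 : inner ℝ e x = b.repr x 0 := by rw [b.repr_apply_apply, hb]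
    have h2 : Real.sqrt (‖x‖ ^ 2 - inner ℝ e x ^ 2) = ‖(splitMap n (b.repr x)).2‖ := by
      rw [← b.repr.norm_map x, h1, EuclideanSpace.norm_sq_eq, Fin.sum_univ_succ,
        EuclideanSpace.norm_eq]
      simp [splitMap]
    simp only [dcone, Set.mem_ofPred_eq, h2, Set.mem_preimage, R, Function.comp]
    rw [h1]
    rfl
  rw [hpre, hmp.measure_preimage hR.nullMeasurableSet, Measure.volume_eq_prod,
    Measure.prod_apply_symm hR, ← cone_integral n hn s h hs hh]
  apply lintegral_congr
  intro y
  have : (fun x : ℝ => (x, y)) ⁻¹' R = Set.Icc (‖y‖ * c / s) (h - (h - c) * ‖y‖ / s) := by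
    ext t
    simp only [R, Set.mem_preimage, Set.mem_ofPred_eq, Set.mem_Icc]
    rw [div_le_iff₀ hs]
    have : h - (h - c) * ‖y‖ / s = (h * s - (h - c) * ‖y‖) / s := by field_simp
    rw [this, le_div_iff₀ hs]
  rw [this, Real.volume_Icc]
  congr 1
  field_simp
  ring

/-- sector: points of the open unit ball whose direction is within `δ` of `e` -/
def sector {n : ℕ} (e : EuclideanSpace ℝ (Fin (n+1))) (c : ℝ) :
    Set (EuclideanSpace ℝ (Fin (n+1))) :=
  {x | c * ‖x‖ ≤ inner ℝ e x ∧ ‖x‖ ≤ 1}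

lemma sector_subset {n : ℕ} (e : EuclideanSpace ℝ (Fin (n+1))) (he : ‖e‖ = 1)
    (s c : ℝ) (hs : 0 < s) (hc : 0 < c) (hsc : s ^ 2 + c ^ 2 = 1) :
    sector e c ⊆ dcone e s c (1 / c) := by
  rintro x ⟨h1, h2⟩
  have hcs : inner ℝ e x ^ 2 ≤ ‖x‖ ^ 2 := by
    have := abs_real_inner_le_norm e x
    rw [he, one_mul] at this
    rw [← sq_abs]
    gcongr
  simp only [dcone, Set.mem_ofPred_eq]
  have hr := Real.sq_sqrt (sub_nonneg.2 hcs)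
  have hr0 := Real.sqrt_nonneg (‖x‖ ^ 2 - inner ℝ e x ^ 2)
  set r := Real.sqrt (‖x‖ ^ 2 - inner ℝ e x ^ 2)
  set t := inner ℝ e x
  have hx := norm_nonneg x
  have ht : 0 ≤ t := le_trans (by positivity) h1
  have hsq : c ^ 2 * ‖x‖ ^ 2 ≤ t ^ 2 := by rw [← mul_pow]; gcongr
  have hx2 : ‖x‖ ^ 2 = r ^ 2 + t ^ 2 := by linarith
  have hx1 : ‖x‖ ^ 2 ≤ 1 := by nlinarith
  constructor
  · apply le_of_sq_le_sq _ (by positivity)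
    rw [hx2] at hsq
    have : s ^ 2 = 1 - c ^ 2 := by linarith
    rw [mul_pow, mul_pow, this]
    nlinarith
  · have h3 : t * c + r * s ≤ 1 := by
      nlinarith [sq_nonneg (t - c), sq_nonneg (r - s)]
    have h4 : 1 / c * s - (1 / c - c) * r = (s / c) * (1 - s * r) := by
      have : (1 / c - c) = s ^ 2 / c := by
        field_simp; linarith
      rw [this]; field_simp
    rw [h4, div_mul_eq_mul_div, le_div_iff₀ hc]
    nlinarith

lemma subset_sector {n : ℕ} (e : EuclideanSpace ℝ (Fin (n+1))) (he : ‖e‖ = 1)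
    (s c : ℝ) (hs : 0 < s) (hc : 0 < c) (hsc : s ^ 2 + c ^ 2 = 1) :
    dcone e s c 1 ⊆ sector e c := by
  rintro x ⟨h1, h2⟩
  have hcs : inner ℝ e x ^ 2 ≤ ‖x‖ ^ 2 := by
    have := abs_real_inner_le_norm e x
    rw [he, one_mul] at this
    rw [← sq_abs]
    gcongr
  have hr := Real.sq_sqrt (sub_nonneg.2 hcs)
  have hr0 := Real.sqrt_nonneg (‖x‖ ^ 2 - inner ℝ e x ^ 2)
  simp only [sector, Set.mem_ofPred_eq]
  set r := Real.sqrt (‖x‖ ^ 2 - inner ℝ e x ^ 2)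
  set t := inner ℝ e x
  have hx := norm_nonneg x
  have ht : 0 ≤ t := by
    have : 0 ≤ t * s := le_trans (by positivity) h1
    exact nonneg_of_mul_nonneg_left this hs
  have hx2 : ‖x‖ ^ 2 = r ^ 2 + t ^ 2 := by linarith
  have hc1 : c < 1 := by nlinarith
  constructor
  · apply le_of_sq_le_sq _ ht
    have h3 : (r * c) ^ 2 ≤ (t * s) ^ 2 := by gcongr
    rw [mul_pow, mul_pow, show s ^ 2 = 1 - c ^ 2 by linarith] at h3
    rw [mul_pow, hx2]
    linarith
  · have hrs : r ≤ s := by nlinarith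
    obtain ⟨ρ, hρ⟩ : ∃ ρ, r = ρ * s := ⟨r / s, by field_simp⟩
    rw [hρ] at h2 hrs hr0
    have hρ0 : 0 ≤ ρ := nonneg_of_mul_nonneg_left hr0 hs
    have hρ1 : ρ ≤ 1 := by nlinarith
    have ht2 : t ≤ 1 - (1 - c) * ρ := by
      refine le_of_mul_le_mul_right ?_ hs
      linarith
    have : ‖x‖ ^ 2 ≤ 1 ^ 2 := by
      rw [hx2, hρ, mul_pow, show s ^ 2 = 1 - c ^ 2 by linarith]
      have : t ^ 2 ≤ (1 - (1 - c) * ρ) ^ 2 := by gcongr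
      nlinarith [mul_nonneg (mul_nonneg hρ0 (sub_nonneg.2 hρ1)) (sub_nonneg.2 hc1.le)]
    exact le_of_sq_le_sq this (by norm_num)

/-- relation of sector to distance -/
lemma dist_sector {n : ℕ} (e x : EuclideanSpace ℝ (Fin (n+1))) (he : ‖e‖ = 1) (hx : x ≠ 0)
    (δ : ℝ) (hδ : 0 ≤ δ) :
    (1 - δ ^ 2 / 2) * ‖x‖ ≤ inner ℝ e x ↔ ‖‖x‖⁻¹ • x - e‖ ≤ δ := by
  have h0 : 0 < ‖x‖ := norm_pos_iff.2 hx
  rw [← sq_le_sq₀ (norm_nonneg _) hδ, @norm_sub_sq_real, norm_smul, he, inner_smul_left,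
    real_inner_comm]
  simp only [norm_inv, norm_norm, inv_mul_cancel₀ h0.ne', map_inv₀, conj_trivial]
  rw [← le_div_iff₀ h0, div_eq_inv_mul (inner ℝ x e)]
  constructor <;> intro h <;> linarith

lemma packing_upper {n : ℕ} (hn : 1 ≤ n) (N : ℕ) (ε s : ℝ) (hε0 : 0 < ε) (hε : ε ≤ 1/2)
    (hs : 0 < s) (hs2 : s ^ 2 + (1 - ε ^ 2 / 2) ^ 2 = 1)
    (x : Fin N → EuclideanSpace ℝ (Fin (n+1))) (hx : ∀ i, ‖x i‖ = 1)
    (hd : ∀ i j, i ≠ j → 2 * ε < ‖x i - x j‖) :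
    N * (unitVol n * s ^ n) ≤ (n + 1) * unitVol (n + 1) := by
  have hc : 0 < 1 - ε ^ 2 / 2 := by nlinarith
  have hv := unitVol_pos n hn
  let D : Fin N → Set (EuclideanSpace ℝ (Fin (n+1))) := fun i =>
    dcone (x i) s (1 - ε ^ 2 / 2) 1 \ {0}
  have hDm : ∀ i, MeasurableSet (D i) := fun i =>
    (isClosed_dcone _ _ _ _).measurableSet.diff (measurableSet_singleton 0)
  have hDs : ∀ i, ∀ y ∈ D i, ‖‖y‖⁻¹ • y - x i‖ ≤ ε ∧ ‖y‖ ≤ 1 := by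
    intro i y hy
    have h := subset_sector (x i) (hx i) s _ hs hc hs2 hy.1
    exact ⟨(dist_sector (x i) y (hx i) hy.2 ε hε0.le).1 h.1, h.2⟩
  have hdis : Pairwise (Function.onFun Disjoint D) := by
    intro i j hij
    rw [Function.onFun, Set.disjoint_left]
    intro y hi hj
    have h1 := (hDs i y hi).1
    have h2 := (hDs j y hj).1
    have h3 := hd i j hij
    have : x i - x j = (‖y‖⁻¹ • y - x j) - (‖y‖⁻¹ • y - x i) := by abel
    rw [this] at h3
    have := norm_sub_le (‖y‖⁻¹ • y - x j) (‖y‖⁻¹ • y - x i)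
    linarith
  have hsub : (⋃ i, D i) ⊆ Metric.closedBall 0 1 := by
    intro y hy
    obtain ⟨i, hi⟩ := Set.mem_iUnion.1 hy
    simpa using (hDs i y hi).2
  have hle := measure_mono (μ := volume) hsub
  have hDv : ∀ i, volume (D i) = ENNReal.ofReal (unitVol n * s ^ n * 1 / (n + 1)) := by
    intro i
    rw [← volume_dcone hn (x i) (hx i) s (1 - ε ^ 2 / 2) 1 hs zero_le_one]
    exact measure_sdiff_null (by simp)
  rw [measure_iUnion hdis hDm, tsum_fintype] at hle
  simp only [hDv, Finset.sum_const, Finset.card_univ, Fintype.card_fin, nsmul_eq_mul] at hle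
  rw [Measure.addHaar_closedBall_eq_addHaar_ball,
    ← ENNReal.ofReal_natCast, ← ENNReal.ofReal_mul (by positivity),
    ENNReal.ofReal_le_iff_le_toReal (measure_ball_lt_top.ne)] at hle
  change _ ≤ unitVol (n + 1) at hle
  rw [mul_one, ← mul_div_assoc, div_le_iff₀ (by positivity)] at hle
  linarith

lemma packing_lower {n : ℕ} (hn : 1 ≤ n) (N : ℕ) (δ s c : ℝ) (hδ : 0 < δ)
    (hcδ : c = 1 - δ ^ 2 / 2) (hc : 0 < c)
    (hs : 0 < s) (hs2 : s ^ 2 + c ^ 2 = 1)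
    (x : Fin N → EuclideanSpace ℝ (Fin (n+1))) (hx : ∀ i, ‖x i‖ = 1)
    (hd : ∀ u : EuclideanSpace ℝ (Fin (n+1)), ‖u‖ = 1 → ∃ i, ‖u - x i‖ ≤ δ) :
    (n + 1) * unitVol (n + 1) * c ≤ N * (unitVol n * s ^ n) := by
  have hv := unitVol_pos n hn
  have hsub : Metric.ball 0 1 \ {0} ⊆ ⋃ i, dcone (x i) s c (1 / c) := by
    intro y hy
    have hy0 : y ≠ 0 := hy.2
    obtain ⟨i, hi⟩ := hd (‖y‖⁻¹ • y) (by
      rw [norm_smul, norm_inv, norm_norm, inv_mul_cancel₀ (norm_ne_zero_iff.2 hy0)])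
    rw [Set.mem_iUnion]
    refine ⟨i, sector_subset (x i) (hx i) s c hs hc hs2 ⟨?_, ?_⟩⟩
    · rw [hcδ]
      exact (dist_sector (x i) y (hx i) hy0 δ hδ.le).2 hi
    · have := hy.1
      simp at this
      exact this.le
  have hle := (measure_mono (μ := volume) hsub).trans (measure_iUnion_fintype_le _ _)
  rw [measure_sdiff_null (by simp)] at hle
  simp only [fun i => volume_dcone hn (x i) (hx i) s c (1 / c) hs (by positivity),
    Finset.sum_const, Finset.card_univ, Fintype.card_fin, nsmul_eq_mul] at hle
  rw [← ENNReal.ofReal_natCast, ← ENNReal.ofReal_mul (by positivity),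
    ← ENNReal.ofReal_toReal (a := volume (Metric.ball _ _)) (measure_ball_lt_top.ne),
    ENNReal.ofReal_le_ofReal_iff (by positivity)] at hle
  change unitVol (n + 1) ≤ _ at hle
  have e : (N : ℝ) * (unitVol n * s ^ n * (1 / c) / (n + 1)) =
    (N * (unitVol n * s ^ n)) / ((n + 1) * c) := by field_simp
  rw [e, le_div_iff₀ (by positivity)] at hle
  linarith

/-- Bounds on the `2ε`-packing number of the Euclidean unit sphere in `ℝ^d`, `d ≥ 2`,
for `ε ∈ (0, 1/2]`. -/
theorem sphere_packing_bounds {d : ℕ} (hd : 2 ≤ d) (ε : ℝ) (hε0 : 0 < ε) (hε : ε ≤ 1 / 2)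
    (N : ℕ)
    (hN : IsGreatest {n : ℕ | ∃ x : Fin n → EuclideanSpace ℝ (Fin d),
      (∀ i, ‖x i‖ = 1) ∧ ∀ i j, i ≠ j → 2 * ε < ‖x i - x j‖} N) :
    Real.sqrt (2 * Real.pi) * Real.sqrt (d - 1) / (Real.sqrt 3 * 2 ^ (d - 1)) / ε ^ (d - 1)
        ≤ (N : ℝ) ∧
    (N : ℝ) ≤ 4 ^ (d - 1) * Real.pi * Real.sqrt (d - 1) / Real.sqrt 15 ^ (d - 1) /
        ε ^ (d - 1) := by
  obtain ⟨n, rfl⟩ : ∃ n, d = n + 1 := ⟨d - 1, by omega⟩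
  have hn : 1 ≤ n := by omega
  obtain ⟨⟨x, hx, hsep⟩, hmax⟩ := hN
  have hv := unitVol_pos n hn
  have hpi := Real.pi_pos
  have hε2 : ε ^ 2 ≤ 1 / 4 := by nlinarith
  rw [show ((n + 1 : ℕ) : ℝ) - 1 = n by push_cast; ring, Nat.add_sub_cancel]
  constructor
  · have hcov : ∀ u : EuclideanSpace ℝ (Fin (n+1)), ‖u‖ = 1 → ∃ i, ‖u - x i‖ ≤ 2 * ε := by
      intro u hu
      by_contra! hcon
      have : N + 1 ≤ N := hmax ⟨Fin.cons u x, by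
        intro i
        refine Fin.cases ?_ (fun i => ?_) i
        · simpa using hu
        · simpa using hx i, by
        intro i j
        refine Fin.cases ?_ (fun i => ?_) i <;> refine Fin.cases ?_ (fun j => ?_) j
        · simp
        · intro _; simpa using hcon j
        · intro _
          rw [norm_sub_rev]
          simpa using hcon i
        · intro hij
          simpa using hsep i j (fun h => hij (by rw [h]))⟩
      omega
    set w := Real.sqrt (1 - ε ^ 2) with hw
    have hw2 : w ^ 2 = 1 - ε ^ 2 := Real.sq_sqrt (by linarith)
    have hw0 : 0 < w := Real.sqrt_pos.2 (by linarith)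
    have hw1 : w ≤ 1 := by nlinarith
    have hc : 0 < 1 - 2 * ε ^ 2 := by linarith
    have h := packing_lower hn N (2 * ε) (2 * ε * w) (1 - 2 * ε ^ 2) (by positivity) (by ring) hc
      (by positivity) (by rw [mul_pow, hw2]; ring) x hx hcov
    have h3 : w ^ n ≤ Real.sqrt 3 * (1 - 2 * ε ^ 2) := by
      calc w ^ n ≤ w ^ 1 := pow_le_pow_of_le_one hw0.le hw1 hn
        _ = w := pow_one w
        _ ≤ _ := by
          apply le_of_sq_le_sq _ (by positivity)
          rw [mul_pow, hw2, Real.sq_sqrt (by norm_num)]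
          nlinarith
    have hr := ratio_lower n hn
    have h4 : Real.sqrt (2 * Real.pi) * Real.sqrt n * (1 - 2 * ε ^ 2) ≤ N * (2 * ε * w) ^ n := by
      refine le_of_mul_le_mul_right ?_ hv
      nlinarith
    rw [div_div, div_le_iff₀ (by positivity)]
    refine le_of_mul_le_mul_right ?_ hc
    calc _ ≤ _ := h4
      _ = N * (2 ^ n * ε ^ n) * w ^ n := by rw [mul_pow, mul_pow]; ring
      _ ≤ N * (2 ^ n * ε ^ n) * (Real.sqrt 3 * (1 - 2 * ε ^ 2)) := by gcongr
      _ = _ := by ring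
  · set w := Real.sqrt (1 - ε ^ 2 / 4) with hw
    have hw2 : w ^ 2 = 1 - ε ^ 2 / 4 := Real.sq_sqrt (by linarith)
    have hw0 : 0 < w := Real.sqrt_pos.2 (by linarith)
    have h := packing_upper hn N ε (ε * w) hε0 hε (by positivity)
      (by rw [mul_pow, hw2]; ring) x hx hsep
    have hr := ratio_upper n hn
    have h4 : N * (ε * w) ^ n ≤ Real.pi * Real.sqrt n := by
      refine le_of_mul_le_mul_right ?_ hv
      linarith
    have h5 : Real.sqrt 15 ≤ 4 * w := by
      apply le_of_sq_le_sq _ (by positivity)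
      rw [mul_pow, hw2, Real.sq_sqrt (by norm_num)]
      linarith
    rw [div_div, le_div_iff₀ (by positivity)]
    calc (N : ℝ) * (Real.sqrt 15 ^ n * ε ^ n) ≤ N * ((4 * w) ^ n * ε ^ n) := by gcongr
      _ = 4 ^ n * (N * (ε * w) ^ n) := by rw [mul_pow, mul_pow]; ring
      _ ≤ 4 ^ n * (Real.pi * Real.sqrt n) := by gcongr
      _ = _ := by ring
end

section
/- There exist constants A, B > 0 (depending only on d) such that every upper semi-continuous log-concave probability density f on ℝ^d with mean vector 0 and identity covariance matrix satisfies f(x) ≤ exp(-A‖x‖ + B) for all x ∈ ℝ^d. -/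
open MeasureTheory InnerProductSpace

theorem lc_parallelepiped_vol {d : ℕ} (v : Fin d → EuclideanSpace ℝ (Fin d)) (w : ℝ) (hw : 0 < w)
    (h : ∀ i, ∃ u : EuclideanSpace ℝ (Fin d), ‖u‖ = 1 ∧ (∀ j < i, inner ℝ (v j) u = 0) ∧
      w ≤ |inner ℝ (v i) u|) :
    w ^ d ≤ volume.real (parallelepiped v) := by
  have hc : Module.finrank ℝ (EuclideanSpace ℝ (Fin d)) = Fintype.card (Fin d) := by simp
  set b := gramSchmidtOrthonormalBasis hc v with hb
  have key : ∀ i, w ≤ |inner ℝ (b i) (v i)| := by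
    intro i
    obtain ⟨u, hu, ho, hi⟩ := h i
    have hg : ∀ j < i, inner ℝ (gramSchmidt ℝ v j) u = 0 := by
      intro j hj
      have hm : gramSchmidt ℝ v j ∈ Submodule.span ℝ (v '' Set.Iio i) := by
        rw [← span_gramSchmidt_Iio]
        exact Submodule.subset_span ⟨j, hj, rfl⟩
      have hle : Submodule.span ℝ (v '' Set.Iio i) ≤ (Submodule.span ℝ {u})ᗮ := by
        rw [Submodule.span_le]
        rintro _ ⟨k, hk, rfl⟩
        simp only [SetLike.mem_coe]
        rw [Submodule.mem_orthogonal_singleton_iff_inner_left]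
        exact ho k hk
      have := hle hm
      rwa [Submodule.mem_orthogonal_singleton_iff_inner_left] at this
    have h1 : inner ℝ (v i) u = inner ℝ (gramSchmidt ℝ v i) u := by
      rw [gramSchmidt_def'' ℝ v i, inner_add_left, sum_inner]
      rw [Finset.sum_eq_zero, add_zero]
      intro j hj
      rw [inner_smul_left, hg j (Finset.mem_Iio.1 hj), mul_zero]
    have h2 : w ≤ ‖gramSchmidt ℝ v i‖ := by
      rw [h1] at hi
      have := abs_real_inner_le_norm (gramSchmidt ℝ v i) u
      rw [hu, mul_one] at this
      linarith
    have h0 : ‖gramSchmidt ℝ v i‖ ≠ 0 := by linarith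
    have h3 : inner ℝ (gramSchmidt ℝ v i) (v i) = ‖gramSchmidt ℝ v i‖ ^ 2 := by
      conv_lhs => rw [gramSchmidt_def'' ℝ v i]
      rw [inner_add_right, inner_sum, Finset.sum_eq_zero, add_zero]
      · rw [real_inner_self_eq_norm_sq]
      · intro j hj
        rw [inner_smul_right,
          gramSchmidt_orthogonal ℝ v (Finset.mem_Iio.1 hj).ne', mul_zero]
    have h4 : b i = gramSchmidtNormed ℝ v i := by
      apply gramSchmidtOrthonormalBasis_apply
      intro hz
      simp [gramSchmidtNormed] at hz
      exact h0 (by simp [hz])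
    rw [h4, gramSchmidtNormed, inner_smul_left, h3]
    have : (starRingEnd ℝ) (((‖gramSchmidt ℝ v i‖ : ℝ) : ℝ)⁻¹) * ‖gramSchmidt ℝ v i‖ ^ 2
      = ‖gramSchmidt ℝ v i‖ := by
      simp
      field_simp
    simp only [RCLike.ofReal_real_eq_id, id] at *
    rw [this, abs_of_nonneg (norm_nonneg _)]
    exact h2
  rw [measureReal_def, ← b.addHaar_eq_volume, Measure.addHaar_parallelepiped,
    ENNReal.toReal_ofReal (abs_nonneg _), hb, gramSchmidtOrthonormalBasis_det, Finset.abs_prod]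
  calc w ^ d = ∏ i : Fin d, w := by simp
    _ ≤ _ := Finset.prod_le_prod (fun _ _ => hw.le) (fun i _ => key i)

theorem lc_choose {d : ℕ} (K : Set (EuclideanSpace ℝ (Fin d))) (w : ℝ)
    (h : ∀ u : EuclideanSpace ℝ (Fin d), ‖u‖ = 1 → ∃ v ∈ K, w ≤ |inner ℝ v u|) (k : ℕ) (hk : k ≤ d) :
    ∃ v : Fin d → EuclideanSpace ℝ (Fin d), ∀ i : Fin d, i.1 < k → v i ∈ K ∧
      ∃ u : EuclideanSpace ℝ (Fin d), ‖u‖ = 1 ∧ (∀ j < i, inner ℝ (v j) u = 0) ∧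
      w ≤ |inner ℝ (v i) u| := by
  induction k with
  | zero => exact ⟨0, fun i hi => absurd hi (by omega)⟩
  | succ k ih =>
    obtain ⟨v, hv⟩ := ih (by omega)
    let k' : Fin d := ⟨k, hk⟩
    let S := Submodule.span ℝ (((Finset.univ.filter (fun i : Fin d => i < k')).image v :
      Finset (EuclideanSpace ℝ (Fin d))) : Set (EuclideanSpace ℝ (Fin d)))
    have hS : Module.finrank ℝ S ≤ k := by
      refine (finrank_span_finset_le_card _).trans (Finset.card_image_le.trans ?_)
      rw [Finset.filter_gt_eq_Iio]
      simp [k']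
    have hne : Sᗮ ≠ ⊥ := by
      rw [Ne, Submodule.orthogonal_eq_bot_iff]
      intro ht
      rw [ht] at hS
      simp at hS
      omega
    obtain ⟨x, hx, hx0⟩ := Submodule.exists_mem_ne_zero_of_ne_bot hne
    have hu : ‖(‖x‖⁻¹ • x)‖ = 1 := norm_smul_inv_norm hx0
    obtain ⟨y, hy, hyw⟩ := h _ hu
    refine ⟨Function.update v k' y, fun i hi => ?_⟩
    rcases Nat.lt_succ_iff_lt_or_eq.1 hi with hi | hi
    · have hik : i ≠ k' := by
        rintro rfl; simp [k'] at hi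
      rw [Function.update_of_ne hik]
      obtain ⟨h1, u, h2, h3, h4⟩ := hv i hi
      refine ⟨h1, u, h2, fun j hj => ?_, h4⟩
      have hjk : j ≠ k' := by
        rintro rfl
        have : k < i.1 := hj
        omega
      rw [Function.update_of_ne hjk]
      exact h3 j hj
    · have : i = k' := Fin.ext hi
      subst this
      rw [Function.update_self]
      refine ⟨hy, _, hu, fun j hj => ?_, hyw⟩
      rw [Function.update_of_ne hj.ne, inner_smul_right]
      rw [(Submodule.mem_orthogonal S x).1 hx (v j) (Submodule.subset_span (by
        simp only [Finset.coe_image, Finset.coe_filter, Finset.mem_univ, true_and]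
        exact ⟨j, hj, rfl⟩)), mul_zero]

theorem lc_level_convex {d : ℕ} (f : EuclideanSpace ℝ (Fin d) → ℝ)
    (hlc : ∀ x y : EuclideanSpace ℝ (Fin d), ∀ a b : ℝ, 0 ≤ a → 0 ≤ b → a + b = 1 →
          f x ^ a * f y ^ b ≤ f (a • x + b • y)) (m : ℝ) (hm : 0 < m) :
    Convex ℝ {x | m ≤ f x} := by
  intro x hx y hy a b ha hb hab
  simp only [Set.mem_ofPred_eq] at *
  calc m = m ^ a * m ^ b := by rw [← Real.rpow_add hm, hab, Real.rpow_one]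
    _ ≤ f x ^ a * f y ^ b := by
      have : 0 ≤ f x := hm.le.trans hx
      gcongr
    _ ≤ _ := hlc x y a b ha hb hab

theorem lc_level_bound {d : ℕ} (hd : 0 < d) (f : EuclideanSpace ℝ (Fin d) → ℝ) (h0 : ∀ x, 0 ≤ f x)
    (hlc : ∀ x y : EuclideanSpace ℝ (Fin d), ∀ a b : ℝ, 0 ≤ a → 0 ≤ b → a + b = 1 →
          f x ^ a * f y ^ b ≤ f (a • x + b • y)) (hfI : Integrable f) (h1 : ∫ x, f x = 1)
    (m w : ℝ) (hm : 0 < m) (hw : 0 < w) (z : EuclideanSpace ℝ (Fin d)) (hz : m ≤ f z)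
    (h : ∀ u : EuclideanSpace ℝ (Fin d), ‖u‖ = 1 → ∃ x, m ≤ f x ∧ w ≤ |inner ℝ (x - z) u|) :
    m * (w / d) ^ d ≤ 1 := by
  have hd' : (0 : ℝ) < d := by exact_mod_cast hd
  obtain ⟨v, hv⟩ := lc_choose {v | m ≤ f (z + v)} w (fun u hu => by
    obtain ⟨x, hx, hxw⟩ := h u hu
    exact ⟨x - z, by simpa using hx, hxw⟩) d le_rfl
  have hK := lc_level_convex f hlc m hm
  have hvol := lc_parallelepiped_vol (fun i => (d : ℝ)⁻¹ • v i) (w / d) (by positivity) (by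
    intro i
    obtain ⟨-, u, h1, h2, h3⟩ := hv i i.2
    refine ⟨u, h1, fun j hj => ?_, ?_⟩
    · rw [inner_smul_left, h2 j hj, mul_zero]
    · rw [real_inner_smul_left, abs_mul, abs_of_pos (inv_pos.2 hd'), div_eq_inv_mul]
      gcongr)
  have hmark := mul_meas_ge_le_integral_of_nonneg (μ := volume) (Filter.Eventually.of_forall h0) hfI m
  rw [h1] at hmark
  have hfin : volume {x | m ≤ f x} ≠ ⊤ := (hfI.measure_ge_lt_top hm).ne
  have hsub : parallelepiped (fun i => (d : ℝ)⁻¹ • v i) ⊆ (fun x => z + x) ⁻¹' {x | m ≤ f x} := by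
    intro x hx
    rw [mem_parallelepiped_iff] at hx
    obtain ⟨t, ⟨ht0, ht1⟩, rfl⟩ := hx
    have : z + ∑ i, t i • (d : ℝ)⁻¹ • v i
        = ∑ i : Fin d, (d : ℝ)⁻¹ • ((1 - t i) • z + t i • (z + v i)) := by
      have : ∀ i : Fin d, (d : ℝ)⁻¹ • ((1 - t i) • z + t i • (z + v i))
        = (d : ℝ)⁻¹ • z + t i • (d : ℝ)⁻¹ • v i := by
        intro i; module
      simp only [this, Finset.sum_add_distrib]
      congr 1
      simp only [Finset.sum_const, Finset.card_univ, Fintype.card_fin]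
      rw [← Nat.cast_smul_eq_nsmul ℝ, smul_smul, mul_inv_cancel₀ hd'.ne', one_smul]
    rw [Set.mem_preimage, this]
    apply hK.sum_mem
    · intro i _; positivity
    · simp [hd'.ne']
    · intro i _
      have a0 := ht0 i
      have a1 := ht1 i
      simp only [Pi.zero_apply, Pi.one_apply] at a0 a1
      exact hK hz (hv i i.2).1 (by linarith) a0 (by ring)
  have hle : volume.real (parallelepiped (fun i => (d : ℝ)⁻¹ • v i)) ≤ volume.real {x | m ≤ f x} := by
    rw [measureReal_def, measureReal_def]
    apply ENNReal.toReal_mono hfin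
    calc _ ≤ _ := measure_mono hsub
      _ = _ := measure_preimage_add _ _ _
  calc m * (w / d) ^ d ≤ m * volume.real {x | m ≤ f x} := by gcongr; linarith
    _ ≤ 1 := hmark

theorem lc_integrable {d : ℕ} (f : EuclideanSpace ℝ (Fin d) → ℝ) (h0 : ∀ x, 0 ≤ f x)
    (hfI : Integrable f)
    (hcov : ∀ i j, ∫ x, f x * (x i * x j) = if i = j then (1 : ℝ) else 0) :
    (∀ i, Integrable (fun x => f x * x i)) ∧ (∀ i j, Integrable (fun x => f x * (x i * x j))) := by
  have h2 : ∀ i, Integrable (fun x => f x * (x i * x i)) := by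
    intro i
    by_contra h
    have := hcov i i
    rw [integral_undef h] at this
    simp at this
  constructor
  · intro i
    refine (hfI.add (h2 i)).mono' (hfI.aestronglyMeasurable.mul (by fun_prop)) ?_
    refine Filter.Eventually.of_forall fun x => ?_
    simp only [Real.norm_eq_abs, abs_mul, abs_of_nonneg (h0 x), Pi.add_apply]
    rw [← mul_one_add]
    gcongr
    · exact h0 x
    · rw [abs_le]; constructor <;> nlinarith [sq_nonneg (x i - 1), sq_nonneg (x i + 1)]
  · intro i j
    refine ((h2 i).add (h2 j)).mono' (hfI.aestronglyMeasurable.mul (by fun_prop)) ?_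
    refine Filter.Eventually.of_forall fun x => ?_
    simp only [Real.norm_eq_abs, Pi.add_apply]
    rw [abs_mul, abs_of_nonneg (h0 x), ← mul_add]
    gcongr
    · exact h0 x
    · rw [abs_le]; constructor <;> nlinarith [sq_nonneg (x i - x j), sq_nonneg (x i + x j)]

theorem lc_moment {d : ℕ} (f : EuclideanSpace ℝ (Fin d) → ℝ) (h0 : ∀ x, 0 ≤ f x)
    (hfI : Integrable f) (h1 : ∫ x, f x = 1) (hmean : ∀ i, ∫ x, f x * x i = 0)
    (hcov : ∀ i j, ∫ x, f x * (x i * x j) = if i = j then (1 : ℝ) else 0)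
    (z u : EuclideanSpace ℝ (Fin d)) (hu : ‖u‖ = 1) :
    Integrable (fun x => f x * (inner ℝ (x - z) u) ^ 2) ∧
    1 ≤ ∫ x, f x * (inner ℝ (x - z) u) ^ 2 := by
  obtain ⟨i1, i2⟩ := lc_integrable f h0 hfI hcov
  set c := inner ℝ z u with hc
  have hx : ∀ x : EuclideanSpace ℝ (Fin d), inner ℝ x u = ∑ i, u i * x i := by
    intro x
    rw [PiLp.inner_apply]
    rfl
  have e : (fun x => f x * (inner ℝ (x - z) u) ^ 2) = fun x =>
      (∑ i, ∑ j, (u i * u j) * (f x * (x i * x j))) - (∑ i, (2 * c * u i) * (f x * x i))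
        + c ^ 2 * f x := by
    funext x
    have a1 : ∑ i, ∑ j, (u i * u j) * (f x * (x i * x j)) = f x * (inner ℝ x u) ^ 2 := by
      rw [hx, sq, Finset.sum_mul_sum, Finset.mul_sum]
      refine Finset.sum_congr rfl fun i _ => ?_
      rw [Finset.mul_sum]
      refine Finset.sum_congr rfl fun j _ => ?_
      ring
    have a2 : ∑ i, (2 * c * u i) * (f x * x i) = 2 * c * f x * (inner ℝ x u) := by
      rw [hx, Finset.mul_sum]
      refine Finset.sum_congr rfl fun i _ => ?_
      ring
    rw [a1, a2, inner_sub_left, ← hc]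
    ring
  have I1 : Integrable (fun x => ∑ i, ∑ j, (u i * u j) * (f x * (x i * x j))) :=
    integrable_finsetSum _ fun i _ => integrable_finsetSum _ fun j _ => (i2 i j).const_mul _
  have I2 : Integrable (fun x => ∑ i, (2 * c * u i) * (f x * x i)) :=
    integrable_finsetSum _ fun i _ => (i1 i).const_mul _
  rw [e]
  refine ⟨(I1.sub I2).add (hfI.const_mul _), ?_⟩
  have I12 : Integrable (fun x => (∑ i, ∑ j, (u i * u j) * (f x * (x i * x j)))
      - ∑ i, (2 * c * u i) * (f x * x i)) := I1.sub I2
  rw [integral_add I12 (hfI.const_mul _), integral_sub I1 I2, integral_const_mul, h1,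
    integral_finsetSum _ fun i _ => (i1 i).const_mul _,
    integral_finsetSum _ fun i _ => integrable_finsetSum _ fun j _ => (i2 i j).const_mul _]
  have b1 : ∑ i, ∫ x, ∑ j, (u i * u j) * (f x * (x i * x j)) = 1 := by
    have : ∀ i, ∫ x, ∑ j, (u i * u j) * (f x * (x i * x j)) = u i ^ 2 := by
      intro i
      rw [integral_finsetSum _ fun j _ => (i2 i j).const_mul _]
      simp only [integral_const_mul, hcov]
      simp [sq]
    simp only [this]
    rw [← EuclideanSpace.real_norm_sq_eq, hu, one_pow]
  have b2 : ∑ i, ∫ x, (2 * c * u i) * (f x * x i) = 0 := by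
    simp only [integral_const_mul, hmean, mul_zero, Finset.sum_const_zero]
  rw [b1, b2]
  nlinarith [sq_nonneg c]

theorem lc_norm_moment {d : ℕ} (f : EuclideanSpace ℝ (Fin d) → ℝ) (h0 : ∀ x, 0 ≤ f x)
    (hfI : Integrable f)
    (hcov : ∀ i j, ∫ x, f x * (x i * x j) = if i = j then (1 : ℝ) else 0) :
    Integrable (fun x => f x * ‖x‖ ^ 2) ∧ ∫ x, f x * ‖x‖ ^ 2 = d := by
  obtain ⟨i1, i2⟩ := lc_integrable f h0 hfI hcov
  have e : (fun x => f x * ‖x‖ ^ 2) = fun x => ∑ i, f x * (x i * x i) := by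
    funext x
    rw [EuclideanSpace.real_norm_sq_eq, Finset.mul_sum]
    simp [sq]
  rw [e]
  refine ⟨integrable_finsetSum _ fun i _ => i2 i i, ?_⟩
  rw [integral_finsetSum _ fun i _ => i2 i i]
  simp [hcov]

theorem lc_affine {d : ℕ} (g : EuclideanSpace ℝ (Fin d) → ℝ) (hg : Integrable g) (a : ℝ) (ha : 0 < a)
    (p : EuclideanSpace ℝ (Fin d)) :
    Integrable (fun x => g (a • x + p)) ∧ ∫ x, g (a • x + p) = (a ^ d)⁻¹ * ∫ x, g x := by
  have hg' : Integrable (fun x => g (x + p)) := hg.comp_add_right p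
  refine ⟨hg'.comp_smul ha.ne', ?_⟩
  rw [Measure.integral_comp_smul_of_nonneg volume (fun x => g (x + p)) a (hR := ha.le),
    integral_add_right_eq_self]
  simp

theorem lc_slab {d : ℕ} (f : EuclideanSpace ℝ (Fin d) → ℝ) (h0 : ∀ x, 0 ≤ f x)
    (hlc : ∀ x y : EuclideanSpace ℝ (Fin d), ∀ a b : ℝ, 0 ≤ a → 0 ≤ b → a + b = 1 →
          f x ^ a * f y ^ b ≤ f (a • x + b • y)) (hfI : Integrable f)
    (h1 : ∫ x, f x = 1) (hmean : ∀ i, ∫ x, f x * x i = 0)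
    (hcov : ∀ i j, ∫ x, f x * (x i * x j) = if i = j then (1 : ℝ) else 0)
    (z u : EuclideanSpace ℝ (Fin d)) (hu : ‖u‖ = 1) (hz : 0 < f z) (w : ℝ) (hw : 0 < w)
    (hw1 : w ^ 2 * (1 + 16 * 2 ^ d) < 1) :
    ∃ x, f z * Real.exp (-1) ≤ f x ∧ w ≤ |inner ℝ (x - z) u| := by
  by_contra! hcon
  set M := f z
  have hcon' : ∀ x, w ≤ |inner ℝ (x - z) u| → f x ≤ M * Real.exp (-1) := by
    intro x hx
    by_contra! h
    exact absurd (hcon x h.le) (not_lt.2 hx)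
  have d1 : ∀ x, w ≤ |inner ℝ (x - z) u| → f x ≤ M * Real.exp (-(|inner ℝ (x - z) u| / w)) := by
    intro x hx
    set s := |inner ℝ (x - z) u| / w with hs
    have hs1 : 1 ≤ s := by rw [hs, le_div_iff₀ hw]; linarith
    have hs0 : 0 < s := by linarith
    have hinv : s⁻¹ ≤ 1 := inv_le_one_of_one_le₀ hs1
    have k1 := hlc z x (1 - s⁻¹) s⁻¹ (by linarith) (by positivity) (by ring)
    have k2 := hcon' ((1 - s⁻¹) • z + s⁻¹ • x) (by
      have : (1 - s⁻¹) • z + s⁻¹ • x - z = s⁻¹ • (x - z) := by module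
      rw [this, real_inner_smul_left, abs_mul, abs_of_pos (inv_pos.2 hs0)]
      have : |inner ℝ (x - z) u| = s * w := by rw [hs]; field_simp
      rw [this, inv_mul_cancel_left₀ hs0.ne'])
    have k3 := k1.trans k2
    have k4 : M ^ (1 - s⁻¹) * M ^ s⁻¹ = M := by
      rw [← Real.rpow_add hz]; simp
    have hp : 0 < M ^ (1 - s⁻¹) := Real.rpow_pos_of_pos hz _
    have k5 : f x ^ s⁻¹ ≤ M ^ s⁻¹ * Real.exp (-1) := by
      refine le_of_mul_le_mul_left ?_ hp
      rw [← mul_assoc, k4]; exact k3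
    have k6 : (f x ^ s⁻¹) ^ s ≤ (M ^ s⁻¹ * Real.exp (-1)) ^ s :=
      Real.rpow_le_rpow (Real.rpow_nonneg (h0 x) _) k5 hs0.le
    rw [Real.rpow_inv_rpow (h0 x) hs0.ne', Real.mul_rpow (by positivity) (Real.exp_pos _).le,
      Real.rpow_inv_rpow hz.le hs0.ne', ← Real.exp_mul] at k6
    simpa using k6
  have d2 : ∀ x, f x * (inner ℝ (x - z) u) ^ 2 ≤
      w ^ 2 * f x + 16 * w ^ 2 * f ((1/2 : ℝ) • x + (1/2 : ℝ) • z) := by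
    intro x
    have hmid := h0 ((1/2 : ℝ) • x + (1/2 : ℝ) • z)
    have hfx := h0 x
    by_cases hx : w ≤ |inner ℝ (x - z) u|
    · set r := |inner ℝ (x - z) u| / w with hr
      have e1 : (inner ℝ (x - z) u) ^ 2 = w ^ 2 * r ^ 2 := by
        rw [← sq_abs, hr]; field_simp
      have k1 := hlc x z (1/2) (1/2) (by norm_num) (by norm_num) (by norm_num)
      have k2 : f x * Real.exp (r / 2) ≤ f ((1/2 : ℝ) • x + (1/2 : ℝ) • z) := by
        refine le_trans ?_ k1
        have a1 : f x * Real.exp r ≤ M := by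
          have := d1 x hx
          rw [Real.exp_neg] at this
          rwa [← le_div_iff₀ (Real.exp_pos _)]
        calc f x * Real.exp (r / 2) = f x ^ (1/2 : ℝ) * (f x * Real.exp r) ^ (1/2 : ℝ) := by
              rw [Real.mul_rpow hfx (Real.exp_pos _).le, ← mul_assoc, ← Real.exp_mul,
                ← Real.rpow_add_of_nonneg hfx (by norm_num) (by norm_num)]
              norm_num
              ring_nf
              simp
          _ ≤ _ := by gcongr
      have k3 : r ^ 2 ≤ 16 * Real.exp (r / 2) := by
        have hr0 : 0 ≤ r := by positivity
        have := Real.add_one_le_exp (r / 4)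
        have e : Real.exp (r / 2) = Real.exp (r / 4) ^ 2 := by
          rw [← Real.exp_nat_mul]; congr 1; push_cast; ring
        rw [e]
        nlinarith
      rw [e1]
      have k4 : f x * r ^ 2 ≤ 16 * f ((1/2 : ℝ) • x + (1/2 : ℝ) • z) := by
        calc f x * r ^ 2 ≤ f x * (16 * Real.exp (r / 2)) := by gcongr
          _ = 16 * (f x * Real.exp (r / 2)) := by ring
          _ ≤ _ := by gcongr
      have := mul_le_mul_of_nonneg_left k4 (sq_nonneg w)
      nlinarith [mul_nonneg (sq_nonneg w) hfx]
    · push Not at hx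
      have : (inner ℝ (x - z) u) ^ 2 ≤ w ^ 2 := by
        rw [← sq_abs]
        gcongr
      nlinarith [mul_nonneg (sq_nonneg w) hmid, mul_le_mul_of_nonneg_left this hfx]
  obtain ⟨m1, m2⟩ := lc_moment f h0 hfI h1 hmean hcov z u hu
  obtain ⟨a1, a2⟩ := lc_affine f hfI (1/2) (by norm_num) ((1/2 : ℝ) • z)
  have := integral_mono m1 ((hfI.const_mul (w ^ 2)).add (a1.const_mul (16 * w ^ 2))) d2
  simp only [Pi.add_apply] at this
  rw [integral_add (hfI.const_mul _) (a1.const_mul _), integral_const_mul, integral_const_mul,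
    a2, h1] at this
  have e : (((1 : ℝ) / 2) ^ d)⁻¹ = 2 ^ d := by rw [one_div, inv_pow, inv_inv]
  rw [e] at this
  nlinarith

theorem lc_tail {d : ℕ} (hd : 0 < d) (f : EuclideanSpace ℝ (Fin d) → ℝ) (h0 : ∀ x, 0 ≤ f x)
    (hlc : ∀ x y : EuclideanSpace ℝ (Fin d), ∀ a b : ℝ, 0 ≤ a → 0 ≤ b → a + b = 1 →
          f x ^ a * f y ^ b ≤ f (a • x + b • y)) (hfI : Integrable f)
    (h1 : ∫ x, f x = 1)
    (hcov : ∀ i j, ∫ x, f x * (x i * x j) = if i = j then (1 : ℝ) else 0)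
    (C T : ℝ) (hC : 0 < C) (hCf : ∀ x, f x ≤ C) (hT : 0 < T) (hTd : 4 * d * 2 ^ d ≤ T ^ 2 / 2 - d)
    (x : EuclideanSpace ℝ (Fin d)) (hx : 2 * T ≤ ‖x‖) : f x ≤ C * Real.exp (-(‖x‖ / T)) := by
  have hd' : (0 : ℝ) < d := by exact_mod_cast hd
  have hx0 : 0 < ‖x‖ := by linarith
  set t := T / ‖x‖ with ht
  have ht0 : 0 < t := by positivity
  have ht1 : t ≤ 1 / 2 := by rw [ht, div_le_iff₀ hx0]; linarith
  set q := (f x / C) ^ t with hq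
  have hq0 : 0 ≤ q := Real.rpow_nonneg (div_nonneg (h0 x) hC.le) _
  have hpt : ∀ y, q * (T ^ 2 / 2) * f y - q * (f y * ‖y‖ ^ 2) ≤
      f ((1 - t) • y + t • x) * ‖(1 - t) • y + t • x‖ ^ 2 := by
    intro y
    have hfy := h0 y
    have k1 : q * f y ≤ f ((1 - t) • y + t • x) := by
      refine le_trans ?_ (hlc y x (1 - t) t (by linarith) ht0.le (by ring))
      have e : f y = f y ^ (1 - t) * f y ^ t := by
        rw [← Real.rpow_add_of_nonneg hfy (by linarith) ht0.le]; simp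
      have e2 : f x ^ t = q * C ^ t := by
        rw [hq, ← Real.mul_rpow (div_nonneg (h0 x) hC.le) hC.le, div_mul_cancel₀ _ hC.ne']
      rw [e2]
      calc q * f y = q * (f y ^ (1 - t) * f y ^ t) := by rw [← e]
        _ ≤ q * (f y ^ (1 - t) * C ^ t) := by
          gcongr
          exact hCf y
        _ = _ := by ring
    set p := (1 - t) • y + t • x with hp
    have k2 : T ≤ ‖p‖ + ‖y‖ := by
      have e : t • x = p - (1 - t) • y := by rw [hp]; module
      have e2 : ‖t • x‖ = T := by
        rw [norm_smul, Real.norm_eq_abs, abs_of_pos ht0, ht]; field_simp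
      have e3 : ‖(1 - t) • y‖ ≤ ‖y‖ := by
        rw [norm_smul, Real.norm_eq_abs, abs_of_nonneg (by linarith)]
        nlinarith [norm_nonneg y]
      rw [← e2, e]
      exact (norm_sub_le _ _).trans (by linarith)
    have k3 : T ^ 2 / 2 - ‖y‖ ^ 2 ≤ ‖p‖ ^ 2 := by
      have : T ^ 2 ≤ (‖p‖ + ‖y‖) ^ 2 := by gcongr
      nlinarith [sq_nonneg (‖p‖ - ‖y‖)]
    calc q * (T ^ 2 / 2) * f y - q * (f y * ‖y‖ ^ 2) = (q * f y) * (T ^ 2 / 2 - ‖y‖ ^ 2) := by ring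
      _ ≤ (q * f y) * ‖p‖ ^ 2 := by gcongr
      _ ≤ _ := by gcongr
  obtain ⟨n1, n2⟩ := lc_norm_moment f h0 hfI hcov
  obtain ⟨a1, a2⟩ := lc_affine (fun x => f x * ‖x‖ ^ 2) n1 (1 - t) (by linarith) (t • x)
  have := integral_mono ((hfI.const_mul (q * (T ^ 2 / 2))).sub (n1.const_mul q)) a1 hpt
  simp only [Pi.sub_apply] at this
  rw [integral_sub (hfI.const_mul _) (n1.const_mul _), integral_const_mul, integral_const_mul,
    a2, h1, n2] at this
  have e : ((1 - t) ^ d)⁻¹ ≤ 2 ^ d := by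
    rw [← inv_pow]
    have : (1 - t)⁻¹ ≤ 2 := by
      rw [inv_le_comm₀ (by linarith) (by norm_num)]; linarith
    have : 0 ≤ (1 - t)⁻¹ := inv_nonneg.2 (by linarith)
    gcongr
  have e' := mul_le_mul_of_nonneg_right e hd'.le
  have k : q * (4 * d * 2 ^ d) ≤ d * 2 ^ d := by
    have := mul_le_mul_of_nonneg_left hTd hq0
    linarith
  have hpos : (0 : ℝ) < d * 2 ^ d := by positivity
  have hq4 : q ≤ 1 / 4 := by
    by_contra! h
    nlinarith
  have hqe : q ≤ Real.exp (-1) := by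
    refine hq4.trans ?_
    rw [Real.exp_neg, one_div]
    gcongr
    have := Real.exp_one_lt_d9
    linarith
  have fin := Real.rpow_le_rpow hq0 hqe (inv_nonneg.2 ht0.le)
  rw [hq, Real.rpow_rpow_inv (div_nonneg (h0 x) hC.le) ht0.ne', ← Real.exp_mul] at fin
  rw [div_le_iff₀ hC] at fin
  have e : (-1 : ℝ) * t⁻¹ = -(‖x‖ / T) := by rw [ht, inv_div]; ring
  rw [e] at fin
  linarith

theorem lc_sup {d : ℕ} (hd : 0 < d) (f : EuclideanSpace ℝ (Fin d) → ℝ) (h0 : ∀ x, 0 ≤ f x)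
    (hlc : ∀ x y : EuclideanSpace ℝ (Fin d), ∀ a b : ℝ, 0 ≤ a → 0 ≤ b → a + b = 1 →
          f x ^ a * f y ^ b ≤ f (a • x + b • y)) (hfI : Integrable f)
    (h1 : ∫ x, f x = 1) (hmean : ∀ i, ∫ x, f x * x i = 0)
    (hcov : ∀ i j, ∫ x, f x * (x i * x j) = if i = j then (1 : ℝ) else 0)
    (z : EuclideanSpace ℝ (Fin d)) :
    f z ≤ Real.exp 1 * (d * (8 * 2 ^ d)) ^ d := by
  have hd' : (0 : ℝ) < d := by exact_mod_cast hd
  rcases (h0 z).eq_or_lt with hz | hz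
  · rw [← hz]; positivity
  have hX : (1 : ℝ) ≤ 2 ^ d := one_le_pow₀ (by norm_num)
  have hw1 : ((8 * 2 ^ d : ℝ)⁻¹) ^ 2 * (1 + 16 * 2 ^ d) < 1 := by
    rw [inv_pow, inv_mul_lt_iff₀ (by positivity)]
    nlinarith
  have key := lc_level_bound hd f h0 hlc hfI h1 (f z * Real.exp (-1)) ((8 * 2 ^ d : ℝ)⁻¹)
    (by positivity) (by positivity) z
    (by
      have : Real.exp (-1) ≤ 1 := Real.exp_le_one_iff.2 (by norm_num)
      nlinarith)
    (fun u hu => lc_slab f h0 hlc hfI h1 hmean hcov z u hu hz _ (by positivity) hw1)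
  have e : ((8 * 2 ^ d : ℝ)⁻¹ / d) ^ d = ((d * (8 * 2 ^ d) : ℝ) ^ d)⁻¹ := by
    rw [← inv_pow]; congr 1; field_simp
  rw [e, ← div_eq_mul_inv, div_le_one (by positivity), Real.exp_neg, ← div_eq_mul_inv,
    div_le_iff₀ (Real.exp_pos _)] at key
  linarith


/-- There exist `A, B > 0` depending only on `d` such that every upper semi-continuous
log-concave probability density on `ℝ^d` with mean `0` and identity covariance satisfies
`f x ≤ exp(-A‖x‖ + B)` for all `x`. -/
theorem logconcave_isotropic_envelope (d : ℕ) :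
    ∃ A B : ℝ, 0 < A ∧ 0 < B ∧
      ∀ f : EuclideanSpace ℝ (Fin d) → ℝ,
        (∀ x, 0 ≤ f x) →
        UpperSemicontinuous f →
        (∀ x y : EuclideanSpace ℝ (Fin d), ∀ a b : ℝ, 0 ≤ a → 0 ≤ b → a + b = 1 →
          f x ^ a * f y ^ b ≤ f (a • x + b • y)) →
        (∫ x, f x = 1) →
        (∀ i, ∫ x, f x * x i = 0) →
        (∀ i j, ∫ x, f x * (x i * x j) = if i = j then (1 : ℝ) else 0) →
        ∀ x, f x ≤ Real.exp (-A * ‖x‖ + B) := by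
  set T : ℝ := 4 * (d + 1) * 2 ^ d with hTdef
  set C : ℝ := Real.exp 1 * (d * (8 * 2 ^ d)) ^ d + 1 with hCdef
  have hX : (1 : ℝ) ≤ 2 ^ d := one_le_pow₀ (by norm_num)
  have hT : 0 < T := by positivity
  have hC1 : 1 ≤ C := by
    rw [hCdef]
    have : (0 : ℝ) ≤ Real.exp 1 * (d * (8 * 2 ^ d)) ^ d := by positivity
    linarith
  have hC : 0 < C := by linarith
  refine ⟨1 / T, Real.log C + 2, by positivity, by
    have := Real.log_nonneg hC1
    linarith, ?_⟩
  intro f h0 _ hlc h1 hmean hcov x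
  have hfI : Integrable f := by
    by_contra h
    rw [integral_undef h] at h1
    norm_num at h1
  have hCf : ∀ x, f x ≤ C := by
    intro x
    rcases Nat.eq_zero_or_pos d with rfl | hd
    · have hm := mul_meas_ge_le_integral_of_nonneg (μ := volume)
        (Filter.Eventually.of_forall h0) hfI (f x)
      rw [h1] at hm
      have hs : {y | f x ≤ f y} = parallelepiped (0 : Fin 0 → EuclideanSpace ℝ (Fin 0)) := by
        ext y
        rw [mem_parallelepiped_iff]
        constructor
        · exact fun _ => ⟨0, by simp, Subsingleton.elim _ _⟩
        · intro _
          simp [Subsingleton.elim y x]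
      have hv := lc_parallelepiped_vol (0 : Fin 0 → EuclideanSpace ℝ (Fin 0)) 1 one_pos
        (fun i => i.elim0)
      rw [hs] at hm
      have hfx := h0 x
      have : f x ≤ 1 := by nlinarith
      linarith
    · have := lc_sup hd f h0 hlc hfI h1 hmean hcov x
      linarith
  have hexp : Real.exp (-(1 / T) * ‖x‖ + (Real.log C + 2))
      = C * Real.exp (-(‖x‖ / T) + 2) := by
    rw [← Real.exp_log hC, ← Real.exp_add, Real.log_exp]
    congr 1
    ring
  rw [hexp]
  by_cases hx : 2 * T ≤ ‖x‖
  · have hd : 0 < d := by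
      rcases Nat.eq_zero_or_pos d with rfl | hd
      · rw [Subsingleton.elim x 0, norm_zero] at hx
        linarith
      · exact hd
    have hd1 : (1 : ℝ) ≤ d := by exact_mod_cast hd
    have hTd : 4 * d * 2 ^ d ≤ T ^ 2 / 2 - d := by
      have a1 : (d : ℝ) ≤ d * 2 ^ d := by nlinarith
      have a2 : (d + 1) * 2 ^ d ≤ ((d + 1 : ℝ) * 2 ^ d) ^ 2 := by
        have : (1 : ℝ) ≤ (d + 1) * 2 ^ d := by nlinarith
        nlinarith
      have a3 : T ^ 2 / 2 = 8 * ((d + 1 : ℝ) * 2 ^ d) ^ 2 := by rw [hTdef]; ring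
      rw [a3]
      nlinarith
    refine (lc_tail hd f h0 hlc hfI h1 hcov C T hC hCf hT hTd x hx).trans ?_
    gcongr
    linarith
  · push Not at hx
    have : ‖x‖ / T ≤ 2 := by rw [div_le_iff₀ hT]; exact hx.le
    have : 1 ≤ Real.exp (-(‖x‖ / T) + 2) := Real.one_le_exp (by linarith)
    have := hCf x
    nlinarith
end

section
/- There exists a constant c > 0 (depending only on d) such that every upper semi-continuous log-concave probability density f on ℝ^d with mean 0 and identity covariance satisfies f(x) ≥ c for all x with ‖x‖ ≤ 1/4. -/
open MeasureTheory Set Filter Topology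
open scoped ENNReal Pointwise

theorem bm_compact {K L : Set ℝ} (hK : IsCompact K) (hL : IsCompact L) (hK0 : K.Nonempty)
    (hL0 : L.Nonempty) : volume K + volume L ≤ volume (K + L) := by
  obtain ⟨k, hk, hkm⟩ := hK.exists_isGreatest hK0
  obtain ⟨l, hl, hlm⟩ := hL.exists_isLeast hL0
  have h1 : volume ((fun x => x + l) '' K) = volume K := by
    simp [image_add_right]
  have h2 : volume ((fun x => k + x) '' L) = volume L := by
    simp [image_add_left]
  have hmL : MeasurableSet ((fun x => k + x) '' L) :=
    (hL.image (by fun_prop)).measurableSet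
  have hi : volume ((fun x => x + l) '' K ∩ (fun x => k + x) '' L) = 0 := by
    refine measure_mono_null (t := {k + l}) ?_ (by simp)
    rintro _ ⟨⟨x, hx, rfl⟩, ⟨y, hy, hxy⟩⟩
    have := hkm hx
    have := hlm hy
    simp only [mem_singleton_iff] at *
    linarith
  have := measure_union_add_inter (μ := volume) ((fun x => x + l) '' K) hmL
  rw [hi, h1, h2, add_zero] at this
  rw [← this]
  apply measure_mono
  rintro _ (⟨x, hx, rfl⟩ | ⟨x, hx, rfl⟩)
  · exact Set.add_mem_add hx hl
  · exact Set.add_mem_add hk hx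

theorem bm_meas {A B : Set ℝ} (hA : MeasurableSet A) (hB : MeasurableSet B) (hA0 : A.Nonempty)
    (hB0 : B.Nonempty) : volume A + volume B ≤ volume (A + B) := by
  obtain ⟨x0, hx0⟩ := hA0
  obtain ⟨y0, hy0⟩ := hB0
  have key : ∀ K ⊆ A, IsCompact K → ∀ L ⊆ B, IsCompact L → volume K + volume L ≤ volume (A + B) := by
    intro K hKA hK L hLB hL
    calc volume K + volume L ≤ volume (K ∪ {x0}) + volume (L ∪ {y0}) := by
          gcongr <;> exact subset_union_left
      _ ≤ volume ((K ∪ {x0}) + (L ∪ {y0})) :=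
          bm_compact (hK.union isCompact_singleton) (hL.union isCompact_singleton)
            ⟨x0, by simp⟩ ⟨y0, by simp⟩
      _ ≤ _ := by
          apply measure_mono
          apply Set.add_subset_add
          · exact union_subset hKA (by simpa using hx0)
          · exact union_subset hLB (by simpa using hy0)
  refine le_of_forall_lt fun c hc => ?_
  by_contra hcon
  push Not at hcon
  apply absurd hc
  push Not
  refine le_trans ?_ hcon
  rw [hA.measure_eq_iSup_isCompact, hB.measure_eq_iSup_isCompact]
  simp only [iSup_and']
  refine ENNReal.biSup_add_biSup_le' ⟨∅, by simp⟩ ⟨∅, by simp⟩ ?_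
  intro K hK L hL
  exact key K hK.1 hK.2 L hL.1 hL.2

theorem bm_scaled {A B C : Set ℝ} {a b : ℝ} (ha : 0 < a) (hb : 0 < b)
    (hA : MeasurableSet A) (hB : MeasurableSet B) (hA0 : A.Nonempty)
    (hB0 : B.Nonempty) (hC : ∀ x ∈ A, ∀ y ∈ B, a * x + b * y ∈ C) :
    ENNReal.ofReal a * volume A + ENNReal.ofReal b * volume B ≤ volume C := by
  have h := bm_meas (hA.const_smul₀ a) (hB.const_smul₀ b)
    (hA0.smul_set (a := a)) (hB0.smul_set (a := b))
  rw [Measure.addHaar_smul, Measure.addHaar_smul] at h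
  simp only [Module.finrank_self, pow_one, abs_of_pos ha, abs_of_pos hb] at h
  refine h.trans (measure_mono ?_)
  rintro _ ⟨_, ⟨x, hx, rfl⟩, _, ⟨y, hy, rfl⟩, rfl⟩
  exact hC x hx y hy

theorem layer1 {f : ℝ → ℝ≥0∞} (hf : Measurable f) (h1 : ∀ x, f x ≤ 1) :
    ∫⁻ x, f x = ∫⁻ t in Ioo (0 : ℝ) 1, volume {x | ENNReal.ofReal t < f x} := by
  have hfin : ∀ x, f x ≠ ∞ := fun x => ((h1 x).trans_lt ENNReal.one_lt_top).ne
  have h := lintegral_eq_lintegral_meas_lt (volume : Measure ℝ) (f := fun x => (f x).toReal)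
    (Eventually.of_forall fun x => ENNReal.toReal_nonneg) hf.ennreal_toReal.aemeasurable
  simp only [ENNReal.ofReal_toReal (hfin _)] at h
  rw [h, ← Ioo_union_Ici_eq_Ioi (zero_lt_one' ℝ), lintegral_union measurableSet_Ici]
  · have : ∫⁻ t in Ici (1:ℝ), volume {x | t < (f x).toReal} = 0 := by
      rw [setLIntegral_congr_fun (g := fun _ => 0) measurableSet_Ici]
      · simp
      · intro t ht
        have : {x | t < (f x).toReal} = ∅ := by
          ext x
          simp only [mem_ofPred_eq, mem_empty_iff_false, iff_false, not_lt]
          refine le_trans ?_ ht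
          simpa using ENNReal.toReal_mono ENNReal.one_ne_top (h1 x)
        simp [this]
    rw [this, add_zero]
    apply setLIntegral_congr_fun measurableSet_Ioo
    intro t ht
    simp only
    congr 1
    ext x
    simp only [mem_ofPred_eq]
    rw [ENNReal.ofReal_lt_iff_lt_toReal ht.1.le (hfin x)]
  · rw [Set.disjoint_left]
    intro x hx hx'
    exact absurd hx.2 (not_lt.2 hx')

theorem pl1_norm {f g h : ℝ → ℝ≥0∞} {a b : ℝ} (ha : 0 < a) (hb : 0 < b) (hab : a + b = 1)
    (hf : Measurable f) (hg : Measurable g) (hh : Measurable h)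
    (hf1 : ∀ x, f x ≤ 1) (hg1 : ∀ x, g x ≤ 1)
    (hfs : ∀ t < 1, ∃ x, t < f x) (hgs : ∀ t < 1, ∃ x, t < g x)
    (H : ∀ x y, f x ^ a * g y ^ b ≤ h (a * x + b * y)) :
    ENNReal.ofReal a * (∫⁻ x, f x) + ENNReal.ofReal b * (∫⁻ x, g x) ≤ ∫⁻ x, h x := by
  have hm : Measurable fun x => min (h x) 1 := hh.min measurable_const
  calc _ ≤ ∫⁻ x, min (h x) 1 := ?_
    _ ≤ _ := lintegral_mono fun x => min_le_left _ _
  rw [layer1 hf hf1, layer1 hg hg1, layer1 hm (fun x => min_le_right _ _)]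
  have anti : ∀ k : ℝ → ℝ≥0∞, Measurable fun t : ℝ => volume {x | ENNReal.ofReal t < k x} := by
    intro k
    apply Antitone.measurable
    intro s t hst
    apply measure_mono
    intro x hx
    exact lt_of_le_of_lt (ENNReal.ofReal_le_ofReal hst) hx
  rw [← lintegral_const_mul _ (anti f), ← lintegral_const_mul _ (anti g),
    ← lintegral_add_left ((anti f).const_mul _)]
  apply setLIntegral_mono' measurableSet_Ioo
  intro t ht
  have ht1 : ENNReal.ofReal t < 1 := by simpa using ht.2
  apply bm_scaled ha hb (measurableSet_lt measurable_const hf) (measurableSet_lt measurable_const hg)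
    (hfs _ ht1) (hgs _ ht1)
  intro x hx y hy
  simp only [mem_ofPred_eq] at hx hy ⊢
  refine lt_min (lt_of_lt_of_le ?_ (H x y)) ht1
  have ht0 : ENNReal.ofReal t ≠ 0 := by simpa using ht.1
  calc ENNReal.ofReal t = ENNReal.ofReal t ^ a * ENNReal.ofReal t ^ b := by
        rw [← ENNReal.rpow_add _ _ ht0 ENNReal.ofReal_ne_top, hab, ENNReal.rpow_one]
    _ < f x ^ a * g y ^ b := by
        apply ENNReal.mul_lt_mul
        · exact ENNReal.rpow_lt_rpow hx ha
        · exact ENNReal.rpow_lt_rpow hy hb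

theorem amgm {a b : ℝ} (ha : 0 < a) (hb : 0 < b) (hab : a + b = 1) (x y : ℝ≥0∞) :
    x ^ a * y ^ b ≤ ENNReal.ofReal a * x + ENNReal.ofReal b * y := by
  by_cases hx : x = ∞
  · rw [hx, ENNReal.mul_top (by simpa using ha)]; simp
  by_cases hy : y = ∞
  · rw [hy, ENNReal.mul_top (by simpa using hb)]; simp
  lift x to NNReal using hx
  lift y to NNReal using hy
  lift a to NNReal using ha.le
  lift b to NNReal using hb.le
  have := NNReal.geom_mean_le_arith_mean2_weighted a b x y (by exact_mod_cast hab)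
  rw [← ENNReal.coe_rpow_of_nonneg _ ha.le, ← ENNReal.coe_rpow_of_nonneg _ hb.le,
    ENNReal.ofReal_coe_nnreal, ENNReal.ofReal_coe_nnreal]
  exact_mod_cast this

theorem pl1_bdd {f g h : ℝ → ℝ≥0∞} {a b : ℝ} (ha : 0 < a) (hb : 0 < b) (hab : a + b = 1)
    (hf : Measurable f) (hg : Measurable g) (hh : Measurable h)
    {M : ℝ≥0∞} (hM : M ≠ ∞) (hf1 : ∀ x, f x ≤ M) (hg1 : ∀ x, g x ≤ M)
    (H : ∀ x y, f x ^ a * g y ^ b ≤ h (a * x + b * y)) :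
    (∫⁻ x, f x) ^ a * (∫⁻ x, g x) ^ b ≤ ∫⁻ x, h x := by
  by_cases hf0 : (⨆ x, f x) = 0
  · have : ∀ x, f x = 0 := by simpa using hf0
    simp [this, ha]
  by_cases hg0 : (⨆ x, g x) = 0
  · have : ∀ x, g x = 0 := by simpa using hg0
    simp [this, hb]
  have hft : (⨆ x, f x) ≠ ∞ := ((iSup_le hf1).trans_lt hM.lt_top).ne
  have hgt : (⨆ x, g x) ≠ ∞ := ((iSup_le hg1).trans_lt hM.lt_top).ne
  set F := ⨆ x, f x with hF
  set G := ⨆ x, g x with hG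
  have hsup : ∀ (k : ℝ → ℝ≥0∞) (K : ℝ≥0∞), K = ⨆ x, k x → K ≠ 0 → K ≠ ∞ → ∀ t < 1, ∃ x, t < K⁻¹ * k x := by
    intro k K hK h0 ht t htt
    have : t * K < ⨆ x, k x := by
      rw [← hK]
      calc t * K < 1 * K := ENNReal.mul_lt_mul_left h0 ht htt
        _ = K := one_mul _
    obtain ⟨x, hx⟩ := lt_iSup_iff.1 this
    refine ⟨x, ?_⟩
    rw [mul_comm, ← div_eq_mul_inv]
    exact (ENNReal.lt_div_iff_mul_lt (Or.inl h0) (Or.inl ht)).2 hx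
  have hle : ∀ (k : ℝ → ℝ≥0∞) (K : ℝ≥0∞), K = ⨆ x, k x → K ≠ 0 → K ≠ ∞ → ∀ x, K⁻¹ * k x ≤ 1 := by
    intro k K hK h0 ht x
    calc K⁻¹ * k x ≤ K⁻¹ * K := by gcongr; rw [hK]; exact le_iSup k x
      _ = 1 := ENNReal.inv_mul_cancel h0 ht
  have key := pl1_norm (f := fun x => F⁻¹ * f x) (g := fun x => G⁻¹ * g x)
    (h := fun x => ((F⁻¹) ^ a * (G⁻¹) ^ b) * h x) ha hb hab (hf.const_mul _) (hg.const_mul _)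
    (hh.const_mul _) (hle f F hF hf0 hft) (hle g G hG hg0 hgt) (hsup f F hF hf0 hft)
    (hsup g G hG hg0 hgt) (by
      intro x y
      rw [ENNReal.mul_rpow_of_nonneg _ _ ha.le, ENNReal.mul_rpow_of_nonneg _ _ hb.le]
      calc _ = F⁻¹ ^ a * G⁻¹ ^ b * (f x ^ a * g y ^ b) := by ring
        _ ≤ _ := by gcongr; exact H x y)
  have key2 := (amgm ha hb hab _ _).trans key
  rw [lintegral_const_mul _ hf, lintegral_const_mul _ hg, lintegral_const_mul _ hh,
    ENNReal.mul_rpow_of_nonneg _ _ ha.le, ENNReal.mul_rpow_of_nonneg _ _ hb.le] at key2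
  have hc0 : F⁻¹ ^ a * G⁻¹ ^ b ≠ 0 := by
    simp [hft, hgt, hf0, hg0, ha]
  have hct : F⁻¹ ^ a * G⁻¹ ^ b ≠ ∞ := by
    apply ENNReal.mul_ne_top <;> apply ENNReal.rpow_ne_top_of_nonneg <;> simp [hf0, hg0, ha.le, hb.le]
  rw [← ENNReal.mul_le_mul_iff_right hc0 hct]
  refine le_trans (le_of_eq ?_) key2
  ring

theorem pl1 {f g h : ℝ → ℝ≥0∞} {a b : ℝ} (ha : 0 < a) (hb : 0 < b) (hab : a + b = 1)
    (hf : Measurable f) (hg : Measurable g) (hh : Measurable h)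
    (H : ∀ x y, f x ^ a * g y ^ b ≤ h (a * x + b * y)) :
    (∫⁻ x, f x) ^ a * (∫⁻ x, g x) ^ b ≤ ∫⁻ x, h x := by
  by_cases hf0 : ∫⁻ x, f x = 0
  · simp [hf0, ha]
  by_cases hg0 : ∫⁻ x, g x = 0
  · simp [hg0, hb]
  have lim : ∀ k : ℝ → ℝ≥0∞, Measurable k →
      Tendsto (fun n : ℕ => ∫⁻ x, min (k x) n) atTop (𝓝 (∫⁻ x, k x)) := by
    intro k hk
    apply lintegral_tendsto_of_tendsto_of_monotone
    · intro n; exact (hk.min measurable_const).aemeasurable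
    · refine Eventually.of_forall fun x m n hmn => ?_
      simp only
      gcongr
    · refine Eventually.of_forall fun x => ?_
      have : Tendsto (fun n : ℕ => min (k x) (n : ℝ≥0∞)) atTop (𝓝 (min (k x) ∞)) :=
        tendsto_const_nhds.min ENNReal.tendsto_nat_nhds_top
      simpa using this
  have l1 := (lim f hf).ennrpow_const a
  have l2 := (lim g hg).ennrpow_const b
  have hfa : (∫⁻ x, f x) ^ a ≠ 0 := by simp [hf0, ha.le, ha]
  have hgb : (∫⁻ x, g x) ^ b ≠ 0 := by simp [hg0, hb.le, hb]
  refine le_of_tendsto' (ENNReal.Tendsto.mul l1 (Or.inl hfa) l2 (Or.inl hgb)) fun n => ?_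
  apply pl1_bdd ha hb hab (hf.min measurable_const) (hg.min measurable_const) hh
    (M := n) (by simp) (fun x => min_le_right _ _) (fun x => min_le_right _ _)
  intro x y
  refine le_trans ?_ (H x y)
  gcongr <;> exact min_le_left _ _

theorem pl_pi {a b : ℝ} (ha : 0 < a) (hb : 0 < b) (hab : a + b = 1) (n : ℕ) :
    ∀ {f g h : (Fin n → ℝ) → ℝ≥0∞}, 
    Measurable f → Measurable g → Measurable h →
    (∀ x y, f x ^ a * g y ^ b ≤ h (a • x + b • y)) →
    (∫⁻ x, f x) ^ a * (∫⁻ x, g x) ^ b ≤ ∫⁻ x, h x := by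
  induction n with
  | zero =>
    intro f g h hf hg hh H
    simp only [Measure.volume_pi_eq_dirac (0 : Fin 0 → ℝ), lintegral_dirac]
    convert H 0 0
  | succ n ih =>
    intro f g h hf hg hh H
    have e := (volume_preserving_piFinSuccAbove (fun _ : Fin (n + 1) => ℝ) 0).symm
    have tr : ∀ k : (Fin (n+1) → ℝ) → ℝ≥0∞, Measurable k →
        ∫⁻ x, k x = ∫⁻ s : ℝ, ∫⁻ y : Fin n → ℝ, k (Fin.cons s y) := by
      intro k hk
      rw [← e.lintegral_comp hk]
      rw [Measure.volume_eq_prod, lintegral_prod (fun z => k ((MeasurableEquiv.piFinSuccAbove (fun _ : Fin (n + 1) => ℝ) 0).symm z))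
        (hk.comp e.measurable).aemeasurable]
      simp [MeasurableEquiv.piFinSuccAbove, Fin.insertNthEquiv]
    have mc : Measurable (fun p : ℝ × (Fin n → ℝ) => (Fin.cons p.1 p.2 : Fin (n+1) → ℝ)) := by
      rw [measurable_pi_iff]
      intro i
      refine Fin.cases ?_ (fun j => ?_) i
      · simpa using measurable_fst
      · simp only [Fin.cons_succ]; fun_prop
    rw [tr f hf, tr g hg, tr h hh]
    apply pl1 ha hb hab
    · exact (hf.comp mc).lintegral_prod_right'
    · exact (hg.comp mc).lintegral_prod_right'
    · exact (hh.comp mc).lintegral_prod_right'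
    intro s t
    apply ih
    · exact hf.comp (mc.comp (measurable_prodMk_left))
    · exact hg.comp (mc.comp (measurable_prodMk_left))
    · exact hh.comp (mc.comp (measurable_prodMk_left))
    intro x y
    refine (H _ _).trans (le_of_eq ?_)
    congr 1
    ext i
    refine Fin.cases ?_ (fun j => ?_) i <;> simp

theorem pl_euclid {d : ℕ} {a b : ℝ} (ha : 0 < a) (hb : 0 < b) (hab : a + b = 1)
    {f g h : EuclideanSpace ℝ (Fin d) → ℝ≥0∞}
    (hf : Measurable f) (hg : Measurable g) (hh : Measurable h)
    (H : ∀ x y, f x ^ a * g y ^ b ≤ h (a • x + b • y)) :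
    (∫⁻ x, f x) ^ a * (∫⁻ x, g x) ^ b ≤ ∫⁻ x, h x := by
  have e := PiLp.volume_preserving_toLp (Fin d)
  rw [← e.lintegral_comp hf, ← e.lintegral_comp hg, ← e.lintegral_comp hh]
  apply pl_pi ha hb hab d (hf.comp e.measurable) (hg.comp e.measurable) (hh.comp e.measurable)
  intro x y
  exact H _ _

theorem tail_one {Ω : Type*} [MeasurableSpace Ω] (μ : Measure Ω) {Z : Ω → ℝ} (hZ : Measurable Z)
    (r : ℝ) : ∫⁻ x, ENNReal.ofReal (Z x - r) ∂μ = ∫⁻ t in Ioi (0:ℝ), μ {x | r + t ≤ Z x} := by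
  have h := lintegral_eq_lintegral_meas_le μ (f := fun x => max (Z x - r) 0)
    (Eventually.of_forall fun x => le_max_right _ _) (by fun_prop)
  have e : ∀ x, ENNReal.ofReal (max (Z x - r) 0) = ENNReal.ofReal (Z x - r) := by
    intro x
    simp
  simp only [e] at h
  rw [h]
  apply setLIntegral_congr_fun measurableSet_Ioi
  intro t ht
  simp only
  congr 1
  ext x
  have : 0 < t := ht
  simp only [mem_ofPred_eq, le_max_iff, not_le.2 this, or_false]
  constructor <;> intro h <;> linarith

theorem tail_two {Ω : Type*} [MeasurableSpace Ω] (μ : Measure Ω) {Z : Ω → ℝ} (hZ : Measurable Z)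
    (r : ℝ) : ∫⁻ x, ENNReal.ofReal (Z x - r) ^ 2 ∂μ =
      ∫⁻ t in Ioi (0:ℝ), μ {x | r + t ≤ Z x} * ENNReal.ofReal (2 * t) := by
  have h := lintegral_comp_eq_lintegral_meas_le_mul μ (f := fun x => max (Z x - r) 0)
    (g := fun t => 2 * t)
    (Eventually.of_forall fun x => le_max_right _ _) (by fun_prop)
    (fun t _ => (by fun_prop : Continuous fun t : ℝ => 2 * t).intervalIntegrable _ _)
    (by
      refine (ae_restrict_iff' measurableSet_Ioi).2 (Eventually.of_forall fun t ht => ?_)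
      have : 0 < t := ht
      positivity)
  have e : ∀ x, ENNReal.ofReal (∫ t in (0:ℝ)..max (Z x - r) 0, 2 * t) = ENNReal.ofReal (Z x - r) ^ 2 := by
    intro x
    rw [intervalIntegral.integral_const_mul, integral_id]
    have : 2 * ((max (Z x - r) 0 ^ 2 - 0 ^ 2) / 2) = max (Z x - r) 0 ^ 2 := by ring
    rw [this, ENNReal.ofReal_pow (le_max_right _ _)]
    simp
  simp only [e] at h
  rw [h]
  apply setLIntegral_congr_fun measurableSet_Ioi
  intro t ht
  simp only
  congr 2
  ext x
  have : 0 < t := ht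
  simp only [mem_ofPred_eq, le_max_iff, not_le.2 this, or_false]
  constructor <;> intro h <;> linarith

/-- Log-concavity of the tail function, in four-point form. -/
def TailLC {Ω : Type*} [MeasurableSpace Ω] (μ : Measure Ω) (Z : Ω → ℝ) : Prop :=
  ∀ p q r s : ℝ, p ≤ q → p ≤ r → p + s = q + r →
    μ {x | p ≤ Z x} * μ {x | s ≤ Z x} ≤ μ {x | q ≤ Z x} * μ {x | r ≤ Z x}

theorem tail_meas {Ω : Type*} [MeasurableSpace Ω] (μ : Measure Ω) (Z : Ω → ℝ) (r : ℝ) :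
    Measurable fun t : ℝ => μ {x | r + t ≤ Z x} := by
  apply Antitone.measurable
  intro s t hst
  apply measure_mono
  intro x hx
  simp only [mem_ofPred_eq] at *
  linarith

theorem lemB {Ω : Type*} [MeasurableSpace Ω] (μ : Measure Ω) {Z : Ω → ℝ} (hZ : Measurable Z)
    (hLC : TailLC μ Z) {p s : ℝ} (hps : p ≤ s) :
    μ {x | p ≤ Z x} * ∫⁻ x, ENNReal.ofReal (Z x - s) ^ 2 ∂μ ≤
      μ {x | s ≤ Z x} * ∫⁻ x, ENNReal.ofReal (Z x - p) ^ 2 ∂μ := by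
  rw [tail_two μ hZ, tail_two μ hZ, ← lintegral_const_mul, ← lintegral_const_mul]
  · apply setLIntegral_mono' measurableSet_Ioi
    intro t ht
    have : 0 < t := ht
    rw [← mul_assoc, ← mul_assoc]
    gcongr ?_ * _
    exact hLC p s (p + t) (s + t) hps (by linarith) (by ring)
  · exact (tail_meas μ Z p).mul (by fun_prop)
  · exact (tail_meas μ Z s).mul (by fun_prop)

theorem int_pos_part (y : ℝ) :
    ENNReal.ofReal y ^ 2 = 2 * ∫⁻ s in Ioi (0:ℝ), ENNReal.ofReal (y - s) := by
  have h1 := tail_one (Measure.dirac y) (Z := id) measurable_id 0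
  have h : ∫⁻ s in Ioi (0:ℝ), ENNReal.ofReal (y - s) = ∫⁻ s in Ioc 0 y, ENNReal.ofReal (y - s) := by
    rw [← lintegral_indicator measurableSet_Ioi, ← lintegral_indicator measurableSet_Ioc]
    apply lintegral_congr
    intro s
    by_cases h0 : 0 < s
    · by_cases hy : s ≤ y
      · simp [indicator, h0, hy]
      · have : y - s ≤ 0 := by linarith
        simp [indicator, h0, hy, ENNReal.ofReal_of_nonpos this]
    · simp [indicator, h0]
  rw [h]
  rcases le_total y 0 with hy | hy
  · simp [hy, ENNReal.ofReal_of_nonpos hy]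
  · rw [← ofReal_integral_eq_lintegral_ofReal, ← intervalIntegral.integral_of_le hy]
    · have : ∫ s in (0:ℝ)..y, (y - s) = y ^ 2 / 2 := by
        rw [intervalIntegral.integral_sub (by simp) (by simp)]
        simp
        ring
      rw [this, ← ENNReal.ofReal_pow hy]
      rw [show (2:ℝ≥0∞) = ENNReal.ofReal 2 by simp, ← ENNReal.ofReal_mul (by norm_num)]
      congr 1; ring
    · exact (by fun_prop : Continuous fun s : ℝ => y - s).integrableOn_Ioc
    · refine (ae_restrict_iff' measurableSet_Ioc).2 (Eventually.of_forall fun t ht => ?_)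
      simpa using ht.2

theorem lemA {Ω : Type*} [MeasurableSpace Ω] (μ : Measure Ω) [IsFiniteMeasure μ] {Z : Ω → ℝ}
    (hZ : Measurable Z) (hLC : TailLC μ Z) (r : ℝ) :
    μ {x | r ≤ Z x} * ∫⁻ x, ENNReal.ofReal (Z x - r) ^ 2 ∂μ ≤
      2 * (∫⁻ x, ENNReal.ofReal (Z x - r) ∂μ) ^ 2 := by
  have h2 : ∫⁻ x, ENNReal.ofReal (Z x - r) ^ 2 ∂μ =
      2 * ∫⁻ s in Ioi (0:ℝ), ∫⁻ x, ENNReal.ofReal (Z x - (r + s)) ∂μ := by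
    simp only [int_pos_part]
    rw [lintegral_const_mul, lintegral_lintegral_swap]
    · simp only [sub_sub]
    · apply Measurable.aemeasurable
      fun_prop
    · apply Measurable.lintegral_prod_right' (f := fun p : Ω × ℝ => ENNReal.ofReal (Z p.1 - r - p.2))
      fun_prop
  have m2 : Measurable fun p : ℝ × ℝ => μ {x | r + (p.1 + p.2) ≤ Z x} :=
    (tail_meas μ Z r).comp (measurable_fst.add measurable_snd)
  have m3 : Measurable fun s : ℝ => ∫⁻ t in Ioi (0:ℝ), μ {x | r + s + t ≤ Z x} := by
    simp only [add_assoc]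
    exact m2.lintegral_prod_right'
  rw [h2]
  simp only [tail_one μ hZ]
  rw [mul_left_comm]
  gcongr
  rw [← lintegral_const_mul _ m3, sq, ← lintegral_mul_const _ (tail_meas μ Z r)]
  apply setLIntegral_mono' measurableSet_Ioi
  intro s hs
  have : 0 < s := hs
  rw [← lintegral_const_mul _ (tail_meas μ Z (r+s)), ← lintegral_const_mul _ (tail_meas μ Z r)]
  apply setLIntegral_mono' measurableSet_Ioi
  intro t ht
  have : 0 < t := ht
  exact hLC r (r + s) (r + t) (r + s + t) (by linarith) (by linarith) (by ring)

theorem quad_int {Ω : Type*} [MeasurableSpace Ω] (μ : Measure Ω) [IsProbabilityMeasure μ]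
    {W : Ω → ℝ} (h1 : Integrable W μ) (h2 : Integrable (fun x => W x ^ 2) μ) (r : ℝ) :
    ∫ x, (W x - r) ^ 2 ∂μ = ∫ x, W x ^ 2 ∂μ - 2 * r * ∫ x, W x ∂μ + r ^ 2 := by
  have i1 : Integrable (fun x => 2 * r * W x) μ := h1.const_mul _
  have i2 : Integrable (fun x => W x ^ 2 - 2 * r * W x) μ := h2.sub i1
  have : (fun x => (W x - r) ^ 2) = fun x => W x ^ 2 - (2 * r) * W x + r ^ 2 := by
    ext x; ring
  rw [this, integral_add i2 (integrable_const _), integral_sub h2 i1, integral_const_mul]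
  simp

theorem tail_lower {Ω : Type*} [MeasurableSpace Ω] (μ : Measure Ω) [IsProbabilityMeasure μ]
    {Z : Ω → ℝ} (hZ : Measurable Z) (hLC : TailLC μ Z) (hLC' : TailLC μ (fun x => - Z x))
    (hi2 : Integrable (fun x => Z x ^ 2) μ) (h1 : ∫ x, Z x ∂μ = 0) (h2 : ∫ x, Z x ^ 2 ∂μ = 1) :
    1 / 1000 ≤ μ.real {x | 1 / 4 ≤ Z x} := by
  by_contra hcon
  push Not at hcon
  have hi1 : Integrable Z μ := by
    have : MemLp Z 2 μ := (memLp_two_iff_integrable_sq hZ.aestronglyMeasurable).2 hi2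
    exact this.integrable (by norm_num)
  have hp : ∀ (W : Ω → ℝ) (r : ℝ), Integrable W μ → Integrable (fun x => max (W x - r) 0) μ :=
    fun W r hW => (hW.sub (integrable_const r)).pos_part
  have hs : ∀ (r : ℝ), Integrable (fun x => (Z x - r) ^ 2) μ := by
    intro r
    have : (fun x => (Z x - r) ^ 2) = fun x => Z x ^ 2 - (2 * r) * Z x + r ^ 2 := by
      ext x; ring
    rw [this]
    exact (hi2.sub (hi1.const_mul _)).add (integrable_const _)
  have hsv : ∀ (r : ℝ), ∫ x, (Z x - r) ^ 2 ∂μ = 1 + r ^ 2 := by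
    intro r
    rw [quad_int μ hi1 hi2, h1, h2]; ring
  have hmaxle : ∀ y : ℝ, max y 0 ^ 2 ≤ y ^ 2 := by
    intro y
    rcases le_total y 0 with h | h
    · rw [max_eq_right h]; simpa using sq_nonneg y
    · rw [max_eq_left h]
  have hq : ∀ r : ℝ, Integrable (fun x => max (Z x - r) 0 ^ 2) μ := by
    intro r
    refine (hs r).mono' (by fun_prop) (Eventually.of_forall fun x => ?_)
    rw [Real.norm_of_nonneg (by positivity)]
    exact hmaxle _
  have hq' : ∀ r : ℝ, Integrable (fun x => max (-Z x - r) 0 ^ 2) μ := by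
    intro r
    refine (hs (-r)).mono' (by fun_prop) (Eventually.of_forall fun x => ?_)
    rw [Real.norm_of_nonneg (by positivity)]
    refine (hmaxle _).trans (le_of_eq ?_)
    ring
  -- real forms
  have r1 : ∀ (W : Ω → ℝ) (r : ℝ), Integrable (fun x => max (W x - r) 0) μ →
      ∫⁻ x, ENNReal.ofReal (W x - r) ∂μ = ENNReal.ofReal (∫ x, max (W x - r) 0 ∂μ) := by
    intro W r hW
    rw [ofReal_integral_eq_lintegral_ofReal hW (Eventually.of_forall fun x => le_max_right _ _)]
    simp
  have r2 : ∀ (W : Ω → ℝ) (r : ℝ), Integrable (fun x => max (W x - r) 0 ^ 2) μ →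
      ∫⁻ x, ENNReal.ofReal (W x - r) ^ 2 ∂μ = ENNReal.ofReal (∫ x, max (W x - r) 0 ^ 2 ∂μ) := by
    intro W r hW
    rw [ofReal_integral_eq_lintegral_ofReal hW (Eventually.of_forall fun x => by positivity)]
    congr 1
    ext x
    rw [ENNReal.ofReal_pow (le_max_right _ _)]
    simp
  have A := lemA μ hZ.neg hLC' (-(1/4))
  have B := lemB μ hZ hLC (p := -5) (s := 1/4) (by norm_num)
  have i3 := hp (fun x => - Z x) (-(1/4)) hi1.neg
  have i4 := hp Z (1/4) hi1
  have e1 := r1 (fun x => - Z x) (-(1/4)) i3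
  have e2 := r2 (fun x => - Z x) (-(1/4)) (hq' _)
  simp only [Pi.neg_apply] at A
  rw [e1, e2] at A
  rw [r2 Z _ (hq _), r2 Z _ (hq _)] at B
  have n1 : 0 ≤ ∫ x, max (-Z x - -(1/4)) 0 ∂μ := integral_nonneg fun x => le_max_right _ _
  have n2 : 0 ≤ ∫ x, max (-Z x - -(1/4)) 0 ^ 2 ∂μ := integral_nonneg fun x => by positivity
  have n3 : ∀ r, 0 ≤ ∫ x, max (Z x - r) 0 ^ 2 ∂μ := fun r => integral_nonneg fun x => by positivity
  have n4 : 0 ≤ ∫ x, max (Z x - 1/4) 0 ∂μ := integral_nonneg fun x => le_max_right _ _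
  have Areal := ENNReal.toReal_mono (by finiteness) A
  have Breal := ENNReal.toReal_mono (by finiteness) B
  simp only [ENNReal.toReal_mul, ENNReal.toReal_pow, ENNReal.toReal_ofReal n1,
    ENNReal.toReal_ofReal n2, ENNReal.toReal_ofReal (n3 _), ENNReal.toReal_ofNat] at Areal Breal
  simp only [← measureReal_def] at Areal Breal
  -- relations
  have c1 : ∫ x, max (Z x - 1/4) 0 ∂μ - ∫ x, max (-Z x - -(1/4)) 0 ∂μ = -(1/4) := by
    rw [← integral_sub i4 i3]
    have : ∀ x, max (Z x - 1/4) 0 - max (-Z x - -(1/4)) 0 = Z x - 1/4 := by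
      intro x
      rcases le_total (Z x) (1/4) with h | h
      · rw [max_eq_right (by linarith), max_eq_left (by linarith)]; ring
      · rw [max_eq_left (by linarith), max_eq_right (by linarith)]; ring
    simp only [this]
    rw [integral_sub hi1 (integrable_const _), h1]
    simp
  have c2 : ∫ x, max (Z x - 1/4) 0 ^ 2 ∂μ + ∫ x, max (-Z x - -(1/4)) 0 ^ 2 ∂μ = 17/16 := by
    rw [← integral_add (hq _) (hq' _)]
    have : ∀ x, max (Z x - 1/4) 0 ^ 2 + max (-Z x - -(1/4)) 0 ^ 2 = (Z x - 1/4) ^ 2 := by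
      intro x
      rcases le_total (Z x) (1/4) with h | h
      · rw [max_eq_right (by linarith), max_eq_left (by linarith)]; ring
      · rw [max_eq_left (by linarith), max_eq_right (by linarith)]; ring
    simp only [this]
    rw [hsv]; norm_num
  have c3 : (∫ x, max (Z x - 1/4) 0 ∂μ) ^ 2 ≤ ∫ x, max (Z x - 1/4) 0 ^ 2 ∂μ := by
    set m := ∫ x, max (Z x - 1/4) 0 ∂μ with hm
    have : 0 ≤ ∫ x, (max (Z x - 1/4) 0 - m) ^ 2 ∂μ := integral_nonneg fun x => by positivity
    rw [quad_int μ i4 (hq _), ← hm] at this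
    nlinarith
  have c4 : ∫ x, max (Z x - -5) 0 ^ 2 ∂μ ≤ 26 := by
    calc _ ≤ ∫ x, (Z x - -5) ^ 2 ∂μ := integral_mono (hq _) (hs _) fun x => hmaxle _
      _ = 26 := by rw [hsv]; norm_num
  have c5 : 24/25 ≤ μ.real {x | -5 ≤ Z x} := by
    have hm : MeasurableSet {x | -5 ≤ Z x} := measurableSet_le measurable_const hZ
    have hc := prob_compl_eq_one_sub (μ := μ) hm
    have hr : μ.real {x | -5 ≤ Z x} = 1 - μ.real {x | -5 ≤ Z x}ᶜ := by
      rw [probReal_compl_eq_one_sub hm]; ring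
    have hk := mul_meas_ge_le_integral_of_nonneg (μ := μ) (f := fun x => Z x ^ 2)
      (Eventually.of_forall fun x => by positivity) hi2 25
    rw [h2] at hk
    have hmono : μ.real {x | -5 ≤ Z x}ᶜ ≤ μ.real {x | 25 ≤ Z x ^ 2} := by
      refine measureReal_mono ?_ (by finiteness)
      intro x hx
      simp only [mem_compl_iff, mem_ofPred_eq, not_le] at hx ⊢
      nlinarith
    linarith
  have c6 : 999/1000 ≤ μ.real {x | -(1/4) ≤ - Z x} := by
    have hm : MeasurableSet {x | 1/4 ≤ Z x} := measurableSet_le measurable_const hZ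
    have hr : μ.real {x | 1/4 ≤ Z x} = 1 - μ.real {x | 1/4 ≤ Z x}ᶜ := by
      rw [probReal_compl_eq_one_sub hm]; ring
    have hmono : μ.real {x | 1/4 ≤ Z x}ᶜ ≤ μ.real {x | -(1/4) ≤ - Z x} := by
      refine measureReal_mono ?_ (by finiteness)
      intro x hx
      simp only [mem_compl_iff, mem_ofPred_eq, not_le] at hx ⊢
      linarith
    linarith
  have d0 : (0:ℝ) ≤ μ.real {x | 1/4 ≤ Z x} := measureReal_nonneg
  have n3a := n3 (1/4)
  have n3b := n3 (-5)
  set m1 := ∫ x, max (Z x - 1/4) 0 ∂μ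
  set m2 := ∫ x, max (Z x - 1/4) 0 ^ 2 ∂μ
  set k1 := ∫ x, max (-Z x - -(1/4)) 0 ∂μ
  set k2 := ∫ x, max (-Z x - -(1/4)) 0 ^ 2 ∂μ
  set w := ∫ x, max (Z x - -5) 0 ^ 2 ∂μ
  have f1 : m2 ≤ 0.028 := by
    have : 24/25 * m2 ≤ 1/1000 * 26 := by
      calc 24/25 * m2 ≤ μ.real {x | -5 ≤ Z x} * m2 := by gcongr
        _ ≤ _ := Breal
        _ ≤ 1/1000 * 26 := by gcongr
    linarith
  have f2 : m1 ≤ 0.2 := by nlinarith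
  have f3 : k1 ≤ 0.45 := by linarith
  have f4 : 999/1000 * k2 ≤ 2 * k1 ^ 2 := by
    calc _ ≤ μ.real {x | -(1/4) ≤ - Z x} * k2 := by gcongr
      _ ≤ _ := Areal
  nlinarith

theorem tailLC_of_logconcave {d : ℕ} {f : EuclideanSpace ℝ (Fin d) → ℝ} (hf0 : ∀ x, 0 ≤ f x)
    (hm : Measurable f)
    (hlc : ∀ x y : EuclideanSpace ℝ (Fin d), ∀ a b : ℝ, 0 ≤ a → 0 ≤ b → a + b = 1 →
          f x ^ a * f y ^ b ≤ f (a • x + b • y)) (u : EuclideanSpace ℝ (Fin d)) :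
    TailLC (volume.withDensity fun x => ENNReal.ofReal (f x)) (fun x => inner ℝ u x) := by
  have hZ : Measurable (fun x : EuclideanSpace ℝ (Fin d) => inner ℝ u x) := by fun_prop
  set μ := (volume : Measure (EuclideanSpace ℝ (Fin d))).withDensity fun x => ENNReal.ofReal (f x) with hμ
  have hms : ∀ p : ℝ, MeasurableSet {x : EuclideanSpace ℝ (Fin d) | p ≤ inner ℝ u x} :=
    fun p => measurableSet_le measurable_const hZ
  have hG : ∀ p : ℝ, μ {x | p ≤ inner ℝ u x} =
      ∫⁻ x, ({x : EuclideanSpace ℝ (Fin d) | p ≤ inner ℝ u x}.indicator fun x => ENNReal.ofReal (f x)) x := by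
    intro p
    rw [hμ, withDensity_apply _ (hms p), lintegral_indicator (hms p)]
  have key : ∀ (a b p s : ℝ), 0 < a → 0 < b → a + b = 1 →
      μ {x | p ≤ inner ℝ u x} ^ a * μ {x | s ≤ inner ℝ u x} ^ b ≤ μ {x | a * p + b * s ≤ inner ℝ u x} := by
    intro a b p s ha hb hab
    rw [hG, hG, hG]
    apply pl_euclid ha hb hab (hm.ennreal_ofReal.indicator (hms _))
      (hm.ennreal_ofReal.indicator (hms _)) (hm.ennreal_ofReal.indicator (hms _))
    intro x y
    by_cases hx : p ≤ inner ℝ u x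
    swap
    · simp [indicator, hx, ha]
    by_cases hy : s ≤ inner ℝ u y
    swap
    · simp [indicator, hy, hb]
    have hxy : a * p + b * s ≤ inner ℝ u (a • x + b • y) := by
      rw [inner_add_right, inner_smul_right, inner_smul_right]
      gcongr
    rw [indicator_of_mem (by exact hx), indicator_of_mem (by exact hy), indicator_of_mem (by exact hxy),
      ENNReal.ofReal_rpow_of_nonneg (hf0 x) ha.le, ENNReal.ofReal_rpow_of_nonneg (hf0 y) hb.le,
      ← ENNReal.ofReal_mul (Real.rpow_nonneg (hf0 x) _)]
    exact ENNReal.ofReal_le_ofReal (hlc x y a b ha.le hb.le hab)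
  intro p q r s hpq hpr hs
  rcases hpq.eq_or_lt with h | hpq
  · have : s = r := by linarith
    rw [h, this]
  rcases hpr.eq_or_lt with h | hpr
  · have : s = q := by linarith
    rw [h, this, mul_comm]
  have hps : 0 < s - p := by linarith
  set a := (r - p) / (s - p) with ha
  set b := (q - p) / (s - p) with hb
  have ha0 : 0 < a := div_pos (by linarith) hps
  have hb0 : 0 < b := div_pos (by linarith) hps
  have hab : a + b = 1 := by
    rw [ha, hb, ← add_div, div_eq_one_iff_eq hps.ne']; linarith
  have has : a * (s - p) = r - p := by rw [ha]; field_simp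
  have hq : a * p + b * s = q := by
    have : b = 1 - a := by linarith
    rw [this]; linarith
  have hr : b * p + a * s = r := by
    have : b = 1 - a := by linarith
    rw [this]; linarith
  have k1 := key a b p s ha0 hb0 hab
  have k2 := key b a p s hb0 ha0 (by linarith)
  rw [hq] at k1
  rw [hr] at k2
  refine le_trans (le_of_eq ?_) (mul_le_mul' k1 k2)
  have e : ∀ x : ℝ≥0∞, x = x ^ a * x ^ b := by
    intro x
    rw [← ENNReal.rpow_add_of_nonneg _ _ ha0.le hb0.le, hab, ENNReal.rpow_one]
  conv_lhs => rw [e (μ {x | p ≤ inner ℝ u x}), e (μ {x | s ≤ inner ℝ u x})]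
  ring

set_option maxHeartbeats 2000000 in
/-- There exists `c > 0` depending only on `d` such that every upper semi-continuous
log-concave probability density on `ℝ^d` with mean `0` and identity covariance satisfies
`f x ≥ c` whenever `‖x‖ ≤ 1/4`. -/
theorem logconcave_isotropic_lower_bound (d : ℕ) :
    ∃ c : ℝ, 0 < c ∧
      ∀ f : EuclideanSpace ℝ (Fin d) → ℝ,
        (∀ x, 0 ≤ f x) →
        UpperSemicontinuous f →
        (∀ x y : EuclideanSpace ℝ (Fin d), ∀ a b : ℝ, 0 ≤ a → 0 ≤ b → a + b = 1 →
          f x ^ a * f y ^ b ≤ f (a • x + b • y)) →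
        (∫ x, f x = 1) →
        (∀ i, ∫ x, f x * x i = 0) →
        (∀ i j, ∫ x, f x * (x i * x j) = if i = j then (1 : ℝ) else 0) →
        ∀ x : EuclideanSpace ℝ (Fin d), ‖x‖ ≤ 1 / 4 → c ≤ f x := by
  set R2 : ℝ := 2000 * (d + 1) with hR2
  have hR2pos : 0 < R2 := by positivity
  set V : ℝ := (volume : Measure (EuclideanSpace ℝ (Fin d))).real (Metric.closedBall 0 (√R2)) with hV
  have hV0 : 0 ≤ V := measureReal_nonneg
  refine ⟨1 / (2000 * (V + 1)), by positivity, ?_⟩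
  intro f hf0 husc hlc hint hmean hcov x0 hx0
  set c : ℝ := 1 / (2000 * (V + 1)) with hc
  have hc0 : 0 < c := by positivity
  by_contra hcon
  push Not at hcon
  have hm : Measurable f := husc.measurable
  have hfi : Integrable f := by
    by_contra h
    rw [integral_undef h] at hint
    norm_num at hint
  set μ := (volume : Measure (EuclideanSpace ℝ (Fin d))).withDensity fun x => ENNReal.ofReal (f x) with hμ
  have hprob : IsProbabilityMeasure μ := by
    constructor
    rw [hμ, withDensity_apply _ MeasurableSet.univ, Measure.restrict_univ,
      ← ofReal_integral_eq_lintegral_ofReal hfi (Eventually.of_forall hf0), hint, ENNReal.ofReal_one]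
  have hInt : ∀ g : EuclideanSpace ℝ (Fin d) → ℝ, ∫ x, g x ∂μ = ∫ x, f x * g x := by
    intro g
    rw [hμ, integral_withDensity_eq_integral_toReal_smul hm.ennreal_ofReal (by simp)]
    simp [ENNReal.toReal_ofReal (hf0 _)]
  have hIntble : ∀ g : EuclideanSpace ℝ (Fin d) → ℝ, Integrable g μ ↔ Integrable (fun x => f x * g x) := by
    intro g
    rw [hμ, integrable_withDensity_iff_integrable_smul' hm.ennreal_ofReal (by simp)]
    simp [ENNReal.toReal_ofReal (hf0 _)]
  have hii : ∀ i, Integrable (fun x : EuclideanSpace ℝ (Fin d) => x i * x i) μ := by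
    intro i
    rw [hIntble]
    by_contra h
    have := hcov i i
    rw [integral_undef h] at this
    simp at this
  have hl2 : ∀ i, MemLp (fun x : EuclideanSpace ℝ (Fin d) => x i) 2 μ := by
    intro i
    rw [memLp_two_iff_integrable_sq (by fun_prop)]
    simpa [sq] using hii i
  have hij : ∀ i j, Integrable (fun x : EuclideanSpace ℝ (Fin d) => x i * x j) μ :=
    fun i j => (hl2 i).integrable_mul (hl2 j)
  have hi : ∀ i, Integrable (fun x : EuclideanSpace ℝ (Fin d) => x i) μ :=
    fun i => (hl2 i).integrable (by norm_num)
  have hns : ∀ x : EuclideanSpace ℝ (Fin d), ‖x‖ ^ 2 = ∑ i, x i * x i := by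
    intro x
    rw [EuclideanSpace.real_norm_sq_eq]
    exact Finset.sum_congr rfl fun i _ => sq _
  have hnorm : ∫ x, ‖x‖ ^ 2 ∂μ = d := by
    simp only [hns]
    rw [integral_finsetSum _ fun i _ => hii i]
    simp [hInt, hcov]
  have hnormi : Integrable (fun x : EuclideanSpace ℝ (Fin d) => ‖x‖ ^ 2) μ := by
    simp only [hns]
    exact integrable_finsetSum _ fun i _ => hii i
  -- sets where `f < c` have small mass
  have small : ∀ S : Set (EuclideanSpace ℝ (Fin d)), MeasurableSet S → (∀ x ∈ S, f x ≤ c) →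
      μ.real S < 1 / 1000 := by
    intro S hS hSc
    have hB : MeasurableSet (Metric.closedBall (0 : EuclideanSpace ℝ (Fin d)) (√R2)) :=
      measurableSet_closedBall
    have h1 : μ.real S ≤ μ.real (S ∩ Metric.closedBall 0 (√R2)) + μ.real {x | R2 ≤ ‖x‖ ^ 2} := by
      refine le_trans (measureReal_mono ?_ (by finiteness)) (measureReal_union_le _ _)
      intro x hx
      by_cases hxB : x ∈ Metric.closedBall (0 : EuclideanSpace ℝ (Fin d)) (√R2)
      · exact Or.inl ⟨hx, hxB⟩
      · right
        simp only [Metric.mem_closedBall, dist_zero_right, not_le] at hxB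
        exact ((Real.sqrt_lt' (lt_of_le_of_lt (Real.sqrt_nonneg _) hxB)).1 hxB).le
    have h2 : μ.real (S ∩ Metric.closedBall 0 (√R2)) ≤ c * V := by
      have : μ (S ∩ Metric.closedBall 0 (√R2)) ≤ ENNReal.ofReal c * volume (Metric.closedBall (0 : EuclideanSpace ℝ (Fin d)) (√R2)) := by
        rw [hμ, withDensity_apply _ (hS.inter hB)]
        calc _ ≤ ∫⁻ x in S ∩ Metric.closedBall 0 (√R2), ENNReal.ofReal c :=
              setLIntegral_mono' (hS.inter hB) fun x hx => ENNReal.ofReal_le_ofReal (hSc x hx.1)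
          _ = ENNReal.ofReal c * volume (S ∩ Metric.closedBall 0 (√R2)) := by simp
          _ ≤ _ := by gcongr; exact inter_subset_right
      have h := ENNReal.toReal_mono (ENNReal.mul_ne_top ENNReal.ofReal_ne_top measure_closedBall_lt_top.ne) this
      rwa [ENNReal.toReal_mul, ENNReal.toReal_ofReal hc0.le] at h
    have h3 := mul_meas_ge_le_integral_of_nonneg (μ := μ) (f := fun x => ‖x‖ ^ 2)
      (Eventually.of_forall fun x => by positivity) hnormi R2
    rw [hnorm] at h3
    have h4 : c * V < 1 / 2000 := by
      rw [hc, one_div_mul_eq_div, div_lt_div_iff₀ (by positivity) (by norm_num)]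
      linarith
    have h5 : μ.real {x : EuclideanSpace ℝ (Fin d) | R2 ≤ ‖x‖ ^ 2} ≤ 1 / 2000 := by
      have hd : (0:ℝ) ≤ d := Nat.cast_nonneg d
      by_contra hh
      push Not at hh
      have : R2 * (1/2000) < R2 * μ.real {x : EuclideanSpace ℝ (Fin d) | R2 ≤ ‖x‖ ^ 2} := by gcongr
      rw [hR2] at this h3
      linarith
    linarith
  -- the superlevel set
  have hconv : Convex ℝ {x | c ≤ f x} := by
    intro x hx y hy a b ha hb hab
    simp only [mem_ofPred_eq] at *
    refine le_trans ?_ (hlc x y a b ha hb hab)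
    calc c = c ^ a * c ^ b := by rw [← Real.rpow_add hc0, hab, Real.rpow_one]
      _ ≤ _ := by
        have := Real.rpow_nonneg (hf0 x) a
        gcongr
  have hclosed : IsClosed {x | c ≤ f x} := husc.isClosed_preimage c
  have hne : ∃ z, c ≤ f z := by
    by_contra h
    push Not at h
    have := small univ MeasurableSet.univ fun x _ => (h x).le
    simp at this
    norm_num at this
  obtain ⟨z, hz⟩ := hne
  obtain ⟨ℓ, t, hℓ, ht⟩ := geometric_hahn_banach_closed_point hconv hclosed (x := x0) (by simpa using hcon)
  set v := (InnerProductSpace.toDual ℝ (EuclideanSpace ℝ (Fin d))).symm ℓ with hv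
  have hvℓ : ∀ x, inner ℝ v x = ℓ x := fun x => InnerProductSpace.toDual_symm_apply
  have hv0 : 0 < ‖v‖ := by
    rw [norm_pos_iff]
    intro h0
    have e1 := hvℓ z
    have e2 := hvℓ x0
    rw [h0, inner_zero_left] at e1 e2
    have := hℓ z hz
    linarith
  set u := ‖v‖⁻¹ • v with hu
  have hun : ‖u‖ = 1 := by rw [hu, norm_smul, norm_inv, norm_norm, inv_mul_cancel₀ hv0.ne']
  have huv : ∀ x, inner ℝ u x = ‖v‖⁻¹ * ℓ x := by
    intro x; rw [hu, real_inner_smul_left, hvℓ]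
  have hux : inner ℝ u x0 ≤ 1 / 4 := by
    calc _ ≤ ‖u‖ * ‖x0‖ := real_inner_le_norm _ _
      _ ≤ 1 / 4 := by rw [hun, one_mul]; exact hx0
  have hsum : ∀ x : EuclideanSpace ℝ (Fin d), inner ℝ u x = ∑ i, u i * x i := by
    intro x
    simp [PiLp.inner_apply, mul_comm]
  have hZ : Measurable (fun x : EuclideanSpace ℝ (Fin d) => inner ℝ u x) := by fun_prop
  have hsq : ∀ x : EuclideanSpace ℝ (Fin d), inner ℝ u x ^ 2 = ∑ i, ∑ j, (u i * u j) * (x i * x j) := by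
    intro x
    rw [hsum, sq, Finset.sum_mul_sum]
    refine Finset.sum_congr rfl fun i _ => Finset.sum_congr rfl fun j _ => ?_
    ring
  have big := tail_lower μ hZ (tailLC_of_logconcave hf0 hm hlc u)
    (by simpa using tailLC_of_logconcave hf0 hm hlc (-u))
    (by
      simp only [hsq]
      exact integrable_finsetSum _ fun i _ => integrable_finsetSum _ fun j _ => (hij i j).const_mul _)
    (by
      simp only [hsum]
      rw [integral_finsetSum _ fun i _ => (hi i).const_mul _]
      simp only [integral_const_mul]
      simp [hInt, hmean])
    (by
      simp only [hsq]
      rw [integral_finsetSum _ fun i _ => integrable_finsetSum _ fun j _ => (hij i j).const_mul _]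
      have : ∀ i, ∫ x : EuclideanSpace ℝ (Fin d), ∑ j, (u i * u j) * (x i * x j) ∂μ = u i ^ 2 := by
        intro i
        rw [integral_finsetSum _ fun j _ => (hij i j).const_mul _]
        simp only [integral_const_mul]
        simp [hInt, hcov, sq]
      simp only [this]
      rw [← EuclideanSpace.real_norm_sq_eq, hun, one_pow])
  have := small {x | 1 / 4 ≤ inner ℝ u x} (measurableSet_le measurable_const hZ) (by
    intro x hx
    by_contra h
    push Not at h
    have h1 := hℓ x h.le
    have h2 : inner ℝ u x0 ≤ inner ℝ u x := hux.trans hx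
    rw [huv, huv] at h2
    have := le_of_mul_le_mul_left h2 (by positivity)
    linarith)
  linarith
end
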